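/- (Cartan–Hadamard, metric version) Let (X,d) be a complete, path-connected length space whose metric is locally convex (every point has a geodesically convex neighborhood on which the induced metric is convex). Then the induced length metric d̃ on the universal cover X̃, for which the covering map is a local isometry, is globally convex and X̃ is uniquely geodesic. -/

import Mathlib

open Set

/-- The length metric associated with `d`: infimum of lengths of rectifiable curves. -/
noncomputable def lengthMetric {X : Type*} [MetricSpace X] (x y : X) : ENNReal :=
  ⨅ σ : {σ : ℝ → X // ContinuousOn σ (Set.Icc 0 1) ∧ σ 0 = x ∧ σ 1 = y ∧
      eVariationOn σ (Set.Icc 0 1) ≠ ⊤},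
    eVariationOn σ.1 (Set.Icc 0 1)

/-- `γ : [0,1] → X` is a geodesic segment from `x` to `y`, parametrized proportionally
to arc length (constant speed). -/
def IsGeodesicSeg {X : Type*} [MetricSpace X] (γ : ℝ → X) (x y : X) : Prop :=
  γ 0 = x ∧ γ 1 = y ∧
  ∀ s ∈ Set.Icc (0:ℝ) 1, ∀ t ∈ Set.Icc (0:ℝ) 1, dist (γ s) (γ t) = dist x y * |s - t|

/-- A constant-speed geodesic `γ : [0,1] → X` lying inside `U`. -/
def IsGeodesicIn {X : Type*} [MetricSpace X] (U : Set X) (γ : ℝ → X) : Prop :=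
  (∀ t ∈ Set.Icc (0:ℝ) 1, γ t ∈ U) ∧
  ∃ lam : ℝ, ∀ s ∈ Set.Icc (0:ℝ) 1, ∀ t ∈ Set.Icc (0:ℝ) 1,
    dist (γ s) (γ t) = lam * |s - t|

namespace CH
open Set Metric Filter Topology

variable {Y : Type*} [MetricSpace Y]

/-- The ball of radius `r` around `z` is geodesic with convex metric. -/
def Good (z : Y) (r : ℝ) : Prop :=
  (∀ a ∈ ball z r, ∀ b ∈ ball z r, ∃ γ : ℝ → Y, γ 0 = a ∧ γ 1 = b ∧ IsGeodesicIn (ball z r) γ) ∧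
  (∀ γ₁ γ₂ : ℝ → Y, IsGeodesicIn (ball z r) γ₁ → IsGeodesicIn (ball z r) γ₂ →
        ∀ t ∈ Set.Icc (0:ℝ) 1,
          dist (γ₁ t) (γ₂ t) ≤ (1 - t) * dist (γ₁ 0) (γ₂ 0) + t * dist (γ₁ 1) (γ₂ 1))

/-- Local geodesic of speed `lam` at scale `δ`. -/
def LG (f : ℝ → Y) (lam δ : ℝ) : Prop :=
  ∀ s ∈ Icc (0:ℝ) 1, ∀ t ∈ Icc (0:ℝ) 1, |s - t| ≤ δ → dist (f s) (f t) = lam * |s - t|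

/-- Local geodesic. -/
def LocGeo (f : ℝ → Y) : Prop := ∃ lam δ, 0 < δ ∧ LG f lam δ

theorem LG.lam_nonneg {f : ℝ → Y} {lam δ : ℝ} (h : LG f lam δ) (hδ : 0 < δ) : 0 ≤ lam := by
  have h1 := h 0 (by simp) (min δ 1) ⟨by positivity, min_le_right _ _⟩
    (by rw [zero_sub, abs_neg, abs_of_pos (by positivity)]; exact min_le_left _ _)
  rw [zero_sub, abs_neg, abs_of_pos (by positivity : 0 < min δ 1)] at h1
  have : 0 ≤ lam * min δ 1 := h1 ▸ dist_nonneg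
  exact nonneg_of_mul_nonneg_left this (by positivity)

theorem LG.lam_unique {f g : ℝ → Y} {lam δ lam' δ' : ℝ} (h : LG f lam δ) (hδ : 0 < δ)
    (h' : LG g lam' δ') (hδ' : 0 < δ') (hfg : EqOn f g (Icc 0 1)) : lam = lam' := by
  set m := min (min δ δ') 1 with hm
  have hmp : 0 < m := by positivity
  have hm1 : m ∈ Icc (0:ℝ) 1 := ⟨hmp.le, min_le_right _ _⟩
  have h0 : (0:ℝ) ∈ Icc (0:ℝ) 1 := by simp
  have e : |0 - m| = m := by rw [zero_sub, abs_neg, abs_of_pos hmp]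
  have h1 := h 0 h0 m hm1 (by rw [e]; exact (min_le_left _ _).trans (min_le_left _ _))
  have h2 := h' 0 h0 m hm1 (by rw [e]; exact (min_le_left _ _).trans (min_le_right _ _))
  rw [e] at h1 h2
  rw [hfg h0, hfg hm1, h2] at h1
  exact (mul_right_cancel₀ hmp.ne' h1).symm

theorem LocGeo.continuousOn {f : ℝ → Y} (h : LocGeo f) : ContinuousOn f (Icc 0 1) := by
  obtain ⟨lam, δ, hδ, h⟩ := h
  have hl := h.lam_nonneg hδ
  rw [Metric.continuousOn_iff]
  intro b hb ε hε
  refine ⟨min δ (ε / (lam + 1)), by positivity, fun a ha hab => ?_⟩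
  rw [Real.dist_eq] at hab
  rw [h a ha b hb (hab.le.trans (min_le_left _ _))]
  have h2 : |a - b| < ε / (lam + 1) := hab.trans_le (min_le_right _ _)
  rw [lt_div_iff₀ (by positivity)] at h2
  nlinarith [abs_nonneg (a - b)]

theorem max_principle {g : ℝ → ℝ} (hg : ContinuousOn g (Icc 0 1)) (h0 : g 0 ≤ 0) (h1 : g 1 ≤ 0)
    (h : ∀ t ∈ Ioo (0:ℝ) 1, ∃ h0 > 0, ∀ k, 0 < k → k ≤ h0 → 0 ≤ t - k → t + k ≤ 1 →
      g t ≤ (g (t - k) + g (t + k)) / 2) : ∀ t ∈ Icc (0:ℝ) 1, g t ≤ 0 := by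
  obtain ⟨m, hm, hmax⟩ := isCompact_Icc.exists_isMaxOn (nonempty_Icc.2 zero_le_one) hg
  by_contra hcon
  push Not at hcon
  obtain ⟨t, ht, htp⟩ := hcon
  have hM : 0 < g m := htp.trans_le (hmax ht)
  have hA : IsCompact (Icc (0:ℝ) 1 ∩ g ⁻¹' {g m}) :=
    isCompact_Icc.of_isClosed_subset (hg.preimage_isClosed_of_isClosed isClosed_Icc
      isClosed_singleton) inter_subset_left
  have hne : (Icc (0:ℝ) 1 ∩ g ⁻¹' {g m}).Nonempty := ⟨m, hm, rfl⟩
  have hT := hA.sInf_mem hne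
  set T := sInf (Icc (0:ℝ) 1 ∩ g ⁻¹' {g m}) with hTdef
  obtain ⟨hT1, hT2⟩ := hT
  have hT2 : g T = g m := hT2
  have hT0 : 0 < T := lt_of_le_of_ne hT1.1 (by rintro h; rw [← h] at hT2; linarith)
  have hT1' : T < 1 := lt_of_le_of_ne hT1.2 (by rintro h; rw [h] at hT2; linarith)
  obtain ⟨k0, hk0, hk⟩ := h T ⟨hT0, hT1'⟩
  set k := min k0 (min T (1 - T)) with hkdef
  have hkp : 0 < k := lt_min hk0 (lt_min hT0 (by linarith))
  have hkT : k ≤ T := (min_le_right _ _).trans (min_le_left _ _)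
  have hkT' : k ≤ 1 - T := (min_le_right _ _).trans (min_le_right _ _)
  have := hk k hkp (min_le_left _ _) (by linarith) (by linarith)
  have ha : g (T - k) < g m := by
    refine lt_of_le_of_ne (hmax ⟨by linarith, by linarith⟩) fun he => ?_
    have : T ≤ T - k := csInf_le hA.bddBelow ⟨⟨by linarith, by linarith⟩, he⟩
    linarith
  have hb : g (T + k) ≤ g m := hmax ⟨by linarith, by linarith⟩
  linarith

theorem LG.sub {f : ℝ → Y} {lam δ : ℝ} (h : LG f lam δ) {u v : ℝ} (hu : 0 ≤ u) (huv : u < v)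
    (hv : v ≤ 1) : LG (fun t => f (u + t * (v - u))) (lam * (v - u)) (δ / (v - u)) := by
  intro s hs t ht hst
  have hvu : 0 < v - u := by linarith
  have e : u + s * (v - u) - (u + t * (v - u)) = (s - t) * (v - u) := by ring
  rw [le_div_iff₀ hvu] at hst
  have := h (u + s * (v - u)) ⟨by nlinarith [hs.1], by nlinarith [hs.2]⟩
    (u + t * (v - u)) ⟨by nlinarith [ht.1], by nlinarith [ht.2]⟩
    (by rw [e, abs_mul, abs_of_pos hvu]; exact hst)
  rw [e, abs_mul, abs_of_pos hvu] at this
  rw [this]; ring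

theorem LG.geoIn {f : ℝ → Y} {lam δ : ℝ} (h : LG f lam δ) {u v : ℝ} (hu : 0 ≤ u) (huv : u < v)
    (hv : v ≤ 1) (hδ : v - u ≤ δ) {B : Set Y} (hB : ∀ t ∈ Icc u v, f t ∈ B) :
    IsGeodesicIn B (fun t => f (u + t * (v - u))) := by
  have hvu : 0 < v - u := by linarith
  refine ⟨fun t ht => hB _ ⟨by nlinarith [ht.1], by nlinarith [ht.2]⟩, lam * (v - u),
    fun s hs t ht => h.sub hu huv hv s hs t ht ?_⟩
  rw [le_div_iff₀ hvu]
  have : |s - t| ≤ 1 := by rw [abs_le]; constructor <;> linarith [hs.1, hs.2, ht.1, ht.2]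
  nlinarith

/-- Local convexity implies convexity for the distance between local geodesics. -/
theorem LocGeo.convex {c c' : ℝ → Y} (hc : LocGeo c) (hc' : LocGeo c')
    (hg : ∀ t ∈ Icc (0:ℝ) 1, ∃ z r, Good z r ∧ c t ∈ ball z r ∧ c' t ∈ ball z r) :
    ∀ t ∈ Icc (0:ℝ) 1,
      dist (c t) (c' t) ≤ (1 - t) * dist (c 0) (c' 0) + t * dist (c 1) (c' 1) := by
  have key : ∀ t ∈ Icc (0:ℝ) 1,
      dist (c t) (c' t) - ((1 - t) * dist (c 0) (c' 0) + t * dist (c 1) (c' 1)) ≤ 0 := by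
    have hcc := hc.continuousOn
    have hcc' := hc'.continuousOn
    apply max_principle
    · exact (continuous_dist.comp_continuousOn (hcc.prodMk hcc')).sub (by fun_prop)
    · simp
    · simp
    intro t ht
    obtain ⟨lam, δ, hδ, h⟩ := hc
    obtain ⟨lam', δ', hδ', h'⟩ := hc'
    have htI : t ∈ Icc (0:ℝ) 1 := ⟨ht.1.le, ht.2.le⟩
    obtain ⟨z, r, hgood, h1, h2⟩ := hg t htI
    have e1 : ∀ᶠ s in 𝓝 t, s ∈ Icc (0:ℝ) 1 → c s ∈ ball z r :=
      eventually_nhdsWithin_iff.1 ((hcc t htI).eventually (isOpen_ball.mem_nhds h1))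
    have e2 : ∀ᶠ s in 𝓝 t, s ∈ Icc (0:ℝ) 1 → c' s ∈ ball z r :=
      eventually_nhdsWithin_iff.1 ((hcc' t htI).eventually (isOpen_ball.mem_nhds h2))
    obtain ⟨η, hη, he⟩ := Metric.eventually_nhds_iff.1 (e1.and e2)
    refine ⟨min (min (δ / 2) (δ' / 2)) (η / 2), by positivity, fun k hk hk0 hk1 hk2 => ?_⟩
    have hkδ : k ≤ δ / 2 := hk0.trans ((min_le_left _ _).trans (min_le_left _ _))
    have hkδ' : k ≤ δ' / 2 := hk0.trans ((min_le_left _ _).trans (min_le_right _ _))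
    have hkη : k ≤ η / 2 := hk0.trans (min_le_right _ _)
    have hin : ∀ s ∈ Icc (t - k) (t + k), c s ∈ ball z r ∧ c' s ∈ ball z r := by
      intro s hs
      have hs' : s ∈ Icc (0:ℝ) 1 := ⟨hk1.trans hs.1, hs.2.trans hk2⟩
      have := he (y := s) (by
        rw [Real.dist_eq, abs_lt]; constructor <;> linarith [hs.1, hs.2])
      exact ⟨this.1 hs', this.2 hs'⟩
    have := hgood.2 _ _
      (h.geoIn hk1 (by linarith) hk2 (by linarith) fun s hs => (hin s hs).1)
      (h'.geoIn hk1 (by linarith : t - k < t + k) hk2 (by linarith) fun s hs => (hin s hs).2)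
      (1/2) (by norm_num)
    have x1 : t - k + 1 / 2 * (t + k - (t - k)) = t := by ring
    have x2 : t - k + 0 * (t + k - (t - k)) = t - k := by ring
    have x3 : t - k + 1 * (t + k - (t - k)) = t + k := by ring
    simp only [x1, x2, x3] at this
    linarith
  intro t ht
  linarith [key t ht]

theorem geoIn_LocGeo {B : Set Y} {f : ℝ → Y} (h : IsGeodesicIn B f) : LocGeo f := by
  obtain ⟨_, lam, h⟩ := h
  exact ⟨lam, 1, one_pos, fun s hs t ht _ => h s hs t ht⟩

theorem LG.geo_of_good {f : ℝ → Y} {lam δ : ℝ} (h : LG f lam δ) (hδ : 0 < δ) {z : Y} {r : ℝ}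
    (hz : Good z r) (hf : ∀ t ∈ Icc (0:ℝ) 1, f t ∈ ball z r) :
    ∀ s ∈ Icc (0:ℝ) 1, ∀ t ∈ Icc (0:ℝ) 1, dist (f s) (f t) = lam * |s - t| := by
  obtain ⟨γ, h0, h1, hγ⟩ := hz.1 (f 0) (hf 0 (by simp)) (f 1) (hf 1 (by simp))
  have heq : EqOn f γ (Icc 0 1) := by
    intro t ht
    have := LocGeo.convex ⟨lam, δ, hδ, h⟩ (geoIn_LocGeo hγ)
      (fun t ht => ⟨z, r, hz, hf t ht, hγ.1 t ht⟩) t ht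
    rw [h0, h1] at this
    simp only [dist_self, mul_zero, add_zero] at this
    exact dist_le_zero.1 this
  obtain ⟨_, lam', h'⟩ := hγ
  have : lam = lam' := h.lam_unique hδ (fun s hs t ht _ => h' s hs t ht) one_pos heq
  intro s hs t ht
  rw [heq hs, heq ht, h' s hs t ht, this]

theorem LG.geo_of_good_sub {f : ℝ → Y} {lam δ : ℝ} (h : LG f lam δ) (hδ : 0 < δ) {z : Y} {r : ℝ}
    (hz : Good z r) {u v : ℝ} (hu : 0 ≤ u) (huv : u < v) (hv : v ≤ 1)
    (hf : ∀ t ∈ Icc u v, f t ∈ ball z r) : dist (f u) (f v) = lam * (v - u) := by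
  have hvu : 0 < v - u := by linarith
  have := (h.sub hu huv hv).geo_of_good (by positivity) hz
    (fun t ht => hf _ ⟨by nlinarith [ht.1], by nlinarith [ht.2]⟩) 0 (by simp) 1 (by simp)
  simpa using this

theorem Good.mono {y z : Y} {r ε : ℝ} (h : Good y r) (hsub : ball z ε ⊆ ball y r) : Good z ε := by
  refine ⟨fun a ha b hb => ?_, fun γ₁ γ₂ h1 h2 =>
    h.2 _ _ ⟨fun t ht => hsub (h1.1 t ht), h1.2⟩ ⟨fun t ht => hsub (h2.1 t ht), h2.2⟩⟩
  obtain ⟨γ, h0, h1, hγ⟩ := h.1 a (hsub ha) b (hsub hb)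
  refine ⟨γ, h0, h1, fun t ht => ?_, hγ.2⟩
  have hε : 0 < ε := dist_nonneg.trans_lt ha
  have := h.2 γ (fun _ => z) hγ ⟨fun t _ => hsub (mem_ball_self hε), 0, by simp⟩ t ht
  rw [h0, h1] at this
  rw [mem_ball] at ha hb ⊢
  rcases eq_or_lt_of_le ht.1 with h | h
  · rw [← h, h0]; exact ha
  · nlinarith [ht.2]

theorem exists_uniform_good (hgood : ∀ y : Y, ∃ r > 0, Good y r) {K : Set Y} (hK : IsCompact K) :
    ∃ ε > 0, ∀ z ∈ K, Good z ε := by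
  choose r hr hg using hgood
  obtain ⟨ε, hε, h⟩ := lebesgue_number_lemma_of_metric (c := fun y => ball y (r y)) hK
    (fun y => isOpen_ball) (fun y _ => mem_iUnion.2 ⟨y, mem_ball_self (hr y)⟩)
  refine ⟨ε, hε, fun z hz => ?_⟩
  obtain ⟨y, hy⟩ := h z hz
  exact (hg y).mono hy

theorem unif_cont {f : ℝ → Y} (hf : ContinuousOn f (Icc 0 1)) {ε : ℝ} (hε : 0 < ε) :
    ∃ δ > 0, δ ≤ 1 ∧ ∀ s ∈ Icc (0:ℝ) 1, ∀ t ∈ Icc (0:ℝ) 1, |s - t| ≤ δ → dist (f s) (f t) < ε := by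
  have := isCompact_Icc.uniformContinuousOn_of_continuous hf
  rw [Metric.uniformContinuousOn_iff] at this
  obtain ⟨δ, hδ, h⟩ := this ε hε
  refine ⟨min (δ / 2) 1, by positivity, min_le_right _ _, fun s hs t ht hst => h s hs t ht ?_⟩
  rw [Real.dist_eq]
  linarith [hst.trans (min_le_left _ _)]

theorem LocGeo.of_limit (hgood : ∀ y : Y, ∃ r > 0, Good y r) {F : ℕ → ℝ → Y} {f : ℝ → Y}
    (hF : ∀ n, LocGeo (F n)) (hf : ContinuousOn f (Icc 0 1))
    (hlim : ∀ ε > 0, ∀ᶠ n in atTop, ∀ t ∈ Icc (0:ℝ) 1, dist (F n t) (f t) < ε) : LocGeo f := by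
  obtain ⟨ε, hε, hg⟩ := exists_uniform_good hgood (isCompact_Icc.image_of_continuousOn hf)
  obtain ⟨δ, hδ, hδ1, hu⟩ := unif_cont hf (half_pos hε)
  choose lam η hη hLG using hF
  have hpt : ∀ t ∈ Icc (0:ℝ) 1, Tendsto (fun n => F n t) atTop (𝓝 (f t)) := by
    intro t ht
    rw [Metric.tendsto_nhds]
    exact fun e he => (hlim e he).mono fun n hn => hn t ht
  have hev : ∀ᶠ n in atTop, ∀ u v : ℝ, 0 ≤ u → u < v → v ≤ 1 → v - u ≤ δ →
      dist (F n u) (F n v) = lam n * (v - u) := by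
    filter_upwards [hlim _ (half_pos hε)] with n hn u v hu0 huv hv hd
    have huI : u ∈ Icc (0:ℝ) 1 := ⟨hu0, by linarith⟩
    refine (hLG n).geo_of_good_sub (hη n) (hg (f u) ⟨u, huI, rfl⟩) hu0 huv hv fun t ht => ?_
    have htI : t ∈ Icc (0:ℝ) 1 := ⟨by linarith [ht.1], by linarith [ht.2]⟩
    have h1 := hn t htI
    have h2 := hu t htI u huI (by rw [abs_of_nonneg] <;> linarith [ht.1, ht.2])
    rw [mem_ball]
    linarith [dist_triangle (F n t) (f t) (f u)]
  have hδI : δ ∈ Icc (0:ℝ) 1 := ⟨hδ.le, hδ1⟩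
  have h0I : (0:ℝ) ∈ Icc (0:ℝ) 1 := by simp
  have hlam : Tendsto lam atTop (𝓝 (dist (f 0) (f δ) / δ)) := by
    have h1 := ((hpt 0 h0I).dist (hpt δ hδI)).div_const δ
    refine h1.congr' ?_
    filter_upwards [hev] with n hn
    rw [hn 0 δ le_rfl hδ hδ1 (by linarith)]
    field_simp
    ring
  have main : ∀ u v : ℝ, 0 ≤ u → u < v → v ≤ 1 → v - u ≤ δ →
      dist (f u) (f v) = (dist (f 0) (f δ) / δ) * (v - u) := by
    intro u v hu0 huv hv hd
    have h1 := (hpt u ⟨hu0, by linarith⟩).dist (hpt v ⟨by linarith, hv⟩)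
    refine tendsto_nhds_unique h1 ((hlam.mul_const (v - u)).congr' ?_)
    filter_upwards [hev] with n hn
    rw [hn u v hu0 huv hv hd]
  refine ⟨dist (f 0) (f δ) / δ, δ, hδ, fun s hs t ht hst => ?_⟩
  rcases lt_trichotomy s t with h | h | h
  · rw [abs_sub_comm, abs_of_pos (by linarith : 0 < t - s)] at hst ⊢
    exact main s t hs.1 h ht.2 hst
  · subst h; simp
  · rw [abs_of_pos (by linarith : 0 < s - t)] at hst ⊢
    rw [dist_comm]
    exact main t s ht.1 h hs.2 hst

end CH

namespace CH
open Set Metric Filter Topology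

variable {Y : Type*} [MetricSpace Y]

open Classical in
/-- A chosen geodesic from `a` to `b` (constant if there is none). -/
noncomputable def Geo (a b : Y) : ℝ → Y :=
  if h : ∃ γ, IsGeodesicSeg γ a b then h.choose else fun _ => a

theorem Geo_spec {a b : Y} (h : ∃ γ, IsGeodesicSeg γ a b) : IsGeodesicSeg (Geo a b) a b := by
  unfold Geo; rw [dif_pos h]; exact h.choose_spec

theorem Geo_zero (a b : Y) : Geo a b 0 = a := by
  by_cases h : ∃ γ, IsGeodesicSeg γ a b
  · exact (Geo_spec h).1
  · unfold Geo; rw [dif_neg h]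

theorem seg_of_geoIn {B : Set Y} {γ : ℝ → Y} (h : IsGeodesicIn B γ) :
    IsGeodesicSeg γ (γ 0) (γ 1) := by
  obtain ⟨_, lam, h⟩ := h
  refine ⟨rfl, rfl, fun s hs t ht => ?_⟩
  rw [h s hs t ht, h 0 (by simp) 1 (by simp)]; simp

theorem Good.exists_seg {z : Y} {r : ℝ} (h : Good z r) {a b : Y} (ha : a ∈ ball z r)
    (hb : b ∈ ball z r) : ∃ γ, IsGeodesicSeg γ a b := by
  obtain ⟨γ, h0, h1, hγ⟩ := h.1 a ha b hb
  have := seg_of_geoIn hγ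
  rw [h0, h1] at this
  exact ⟨γ, this⟩

theorem seg_geoIn {z a b : Y} {r : ℝ} {γ : ℝ → Y} (h : IsGeodesicSeg γ a b)
    (ha : a ∈ ball z (r / 3)) (hb : b ∈ ball z (r / 3)) : IsGeodesicIn (ball z r) γ := by
  refine ⟨fun t ht => ?_, dist a b, h.2.2⟩
  have h1 := h.2.2 t ht 0 (by simp)
  rw [h.1, sub_zero, abs_of_nonneg ht.1] at h1
  rw [mem_ball] at *
  have h2 := dist_triangle (γ t) a z
  have h3 := dist_triangle_right a b z
  have h4 : dist a b * t ≤ dist a b := mul_le_of_le_one_right dist_nonneg ht.2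
  linarith

theorem Good.conv3 {z : Y} {r : ℝ} (h : Good z r) {a b a' b' : Y} {γ γ' : ℝ → Y}
    (ha : a ∈ ball z (r / 3)) (hb : b ∈ ball z (r / 3)) (ha' : a' ∈ ball z (r / 3))
    (hb' : b' ∈ ball z (r / 3)) (hγ : IsGeodesicSeg γ a b) (hγ' : IsGeodesicSeg γ' a' b')
    {t : ℝ} (ht : t ∈ Icc (0:ℝ) 1) :
    dist (γ t) (γ' t) ≤ (1 - t) * dist a a' + t * dist b b' := by
  have := h.2 γ γ' (seg_geoIn hγ ha hb) (seg_geoIn hγ' ha' hb') t ht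
  rwa [hγ.1, hγ.2.1, hγ'.1, hγ'.2.1] at this

theorem ball_third {z : Y} {r : ℝ} : ball z (r / 3) ⊆ ball z r := by
  intro a ha
  have : 0 < r / 3 := dist_nonneg.trans_lt ha
  exact ball_subset_ball (by linarith) ha

theorem Good.Geo3 {z : Y} {r : ℝ} (h : Good z r) {a b : Y}
    (ha : a ∈ ball z (r / 3)) (hb : b ∈ ball z (r / 3)) : IsGeodesicSeg (Geo a b) a b :=
  Geo_spec (h.exists_seg (ball_third ha) (ball_third hb))

theorem Good.unique3 {z : Y} {r : ℝ} (h : Good z r) {a b : Y} {γ γ' : ℝ → Y}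
    (ha : a ∈ ball z (r / 3)) (hb : b ∈ ball z (r / 3))
    (hγ : IsGeodesicSeg γ a b) (hγ' : IsGeodesicSeg γ' a b)
    {t : ℝ} (ht : t ∈ Icc (0:ℝ) 1) : γ t = γ' t := by
  have := h.conv3 ha hb ha hb hγ hγ' ht
  simp only [dist_self, mul_zero, add_zero] at this
  exact dist_le_zero.1 this

/-- One relaxation step. -/
noncomputable def relax (N : ℕ) (x : ℕ → Y) : ℕ → Y
  | 0 => x 0
  | (i + 1) => if i + 2 ≤ N then Geo (x i) (x (i + 2)) (1 / 2) else x (i + 1)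

theorem chain_fixed [CompleteSpace Y] {N : ℕ} (hN : 2 ≤ N) {z : ℕ → Y} {ε : ℝ} 
    (hg : ∀ i ≤ N, Good (z i) ε) (hstep : ∀ i < N, dist (z i) (z (i + 1)) < ε / 6)
    (hmid : ∀ i, i + 2 ≤ N → ∃ γ, IsGeodesicSeg γ (z i) (z (i + 2)) ∧ γ (1 / 2) = z (i + 1))
    {y : Y} (hy : dist (z N) y < ε / 6) :
    ∃ x : ℕ → Y, x 0 = z 0 ∧ x N = y ∧ (∀ i ≤ N, dist (x i) (z i) ≤ (i / N : ℝ) * dist (z N) y) ∧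
      ∀ i, i + 2 ≤ N → x (i + 1) = Geo (x i) (x (i + 2)) (1 / 2) := by
  set η := dist (z N) y with hη
  have hη0 : 0 ≤ η := dist_nonneg
  have hNp : (0:ℝ) < N := by exact_mod_cast (by omega : 0 < N)
  let K : (ℕ → Y) → Prop := fun x => x 0 = z 0 ∧ x N = y ∧
    ∀ i ≤ N, dist (x i) (z i) ≤ (i / N : ℝ) * η
  have hle : ∀ i : ℕ, i ≤ N → (i / N : ℝ) * η ≤ η := by
    intro i hi
    apply mul_le_of_le_one_left hη0
    rw [div_le_one hNp]; exact_mod_cast hi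
  have hKb : ∀ x, K x → ∀ i, i + 2 ≤ N → x i ∈ ball (z (i + 1)) (ε / 3) ∧
      x (i + 2) ∈ ball (z (i + 1)) (ε / 3) := by
    rintro x ⟨_, _, hx⟩ i hi
    rw [mem_ball, mem_ball]
    have h1 := (hx i (by omega)).trans (hle i (by omega))
    have h2 := (hx (i + 2) hi).trans (hle _ hi)
    have h3 := hstep i (by omega)
    have h4 := hstep (i + 1) (by omega)
    rw [dist_comm] at h4
    constructor
    · linarith [dist_triangle (x i) (z i) (z (i + 1))]
    · linarith [dist_triangle (x (i + 2)) (z (i + 2)) (z (i + 1))]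
  have hGeo : ∀ x, K x → ∀ i, i + 2 ≤ N → IsGeodesicSeg (Geo (x i) (x (i + 2))) (x i) (x (i + 2)) :=
    fun x hx i hi => (hg (i + 1) (by omega)).Geo3 (hKb x hx i hi).1 (hKb x hx i hi).2
  have hcomp : ∀ x x', K x → K x' → ∀ i, i + 2 ≤ N →
      dist (Geo (x i) (x (i + 2)) (1 / 2)) (Geo (x' i) (x' (i + 2)) (1 / 2)) ≤
        (dist (x i) (x' i) + dist (x (i + 2)) (x' (i + 2))) / 2 := by
    intro x x' hx hx' i hi
    have := (hg (i + 1) (by omega)).conv3 (hKb x hx i hi).1 (hKb x hx i hi).2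
      (hKb x' hx' i hi).1 (hKb x' hx' i hi).2 (hGeo x hx i hi) (hGeo x' hx' i hi)
      (t := 1 / 2) (by norm_num)
    linarith
  have hzb : ∀ i, i + 2 ≤ N → z i ∈ ball (z (i + 1)) (ε / 3) ∧
      z (i + 2) ∈ ball (z (i + 1)) (ε / 3) := by
    intro i hi
    have h3 := hstep i (by omega)
    have h4 := hstep (i + 1) (by omega)
    rw [dist_comm] at h4
    rw [mem_ball, mem_ball]
    exact ⟨by linarith, by linarith⟩
  have hKT : ∀ x, K x → K (relax N x) := by
    intro x hx
    refine ⟨hx.1, ?_, ?_⟩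
    · obtain ⟨M, rfl⟩ : ∃ M, N = M + 1 := ⟨N - 1, by omega⟩
      simp only [relax]
      rw [if_neg (by omega)]; exact hx.2.1
    · rintro (_ | i) hi
      · exact hx.2.2 0 hi
      · simp only [relax]
        split_ifs with h
        · obtain ⟨γ, hγ, hγm⟩ := hmid i h
          have := (hg (i + 1) (by omega)).conv3 (hKb x hx i h).1 (hKb x hx i h).2
            (hzb i h).1 (hzb i h).2 (hGeo x hx i h) hγ (t := 1 / 2) (by norm_num)
          rw [hγm] at this
          have h1 := hx.2.2 i (by omega)
          have h2 := hx.2.2 (i + 2) h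
          push_cast at h2 ⊢
          have e : ((i + 1 : ℝ) / N) * η = (1 - 1/2) * ((i / N : ℝ) * η) +
            1/2 * (((i + 2 : ℝ) / N) * η) := by field_simp; ring
          rw [e]
          linarith
        · exact hx.2.2 _ hi
  let X : ℕ → ℕ → Y := fun n => (relax N)^[n] (fun i => if i < N then z i else y)
  have hXs : ∀ n, X (n + 1) = relax N (X n) := fun n => Function.iterate_succ_apply' _ _ _
  have hXK : ∀ n, K (X n) := by
    intro n
    induction n with
    | zero =>
      refine ⟨?_, ?_, ?_⟩
      · simp only [X, Function.iterate_zero, id]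
        rw [if_pos (by omega)]
      · simp [X]
      · intro i hi
        simp only [X, Function.iterate_zero, id]
        split_ifs with h
        · rw [dist_self]; positivity
        · have : i = N := by omega
          subst this
          rw [div_self hNp.ne', one_mul, dist_comm]
    | succ n ih => rw [hXs]; exact hKT _ ih
  let w : ℕ → ℝ := fun i => (i : ℝ) * (N - i)
  let q : ℝ := 1 - 1 / (N : ℝ) ^ 2
  have hN1 : (1:ℝ) ≤ N := by exact_mod_cast (by omega : 1 ≤ N)
  have hq0 : 0 ≤ q := by
    have : 1 / (N : ℝ) ^ 2 ≤ 1 := by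
      rw [div_le_one (by positivity)]; nlinarith
    simp only [q]; linarith
  have hq1 : q < 1 := by
    have : 0 < 1 / (N : ℝ) ^ 2 := by positivity
    simp only [q]; linarith
  have hbd : ∀ n i, i ≤ N → dist (X n i) (X (n + 1) i) ≤ 2 * η * w i * q ^ n := by
    intro n
    induction n with
    | zero =>
      intro i hi
      rcases Nat.eq_zero_or_pos i with h0 | h0
      · subst h0
        rw [(hXK 0).1, (hXK 1).1]; simp [w]
      rcases Nat.eq_or_lt_of_le hi with h1 | h1
      · subst h1
        rw [(hXK 0).2.1, (hXK 1).2.1]; simp [w]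
      have a1 := ((hXK 0).2.2 i hi).trans (hle i hi)
      have a2 := ((hXK 1).2.2 i hi).trans (hle i hi)
      have hw : 1 ≤ w i := by
        have b1 : (1:ℝ) ≤ i := by exact_mod_cast h0
        have b2 : (i:ℝ) + 1 ≤ N := by exact_mod_cast h1
        simp only [w]; nlinarith
      have a3 := dist_triangle_right (X 0 i) (X (0 + 1) i) (z i)
      simp only [pow_zero, mul_one, zero_add] at *
      nlinarith
    | succ n ih =>
      rintro (_ | i) hi
      · rw [(hXK _).1, (hXK _).1]; simp [w]
      rcases Nat.eq_or_lt_of_le hi with h1 | h1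
      · rw [h1, (hXK _).2.1, (hXK _).2.1]; simp [w]
      have e1 : X (n + 1) (i + 1) = Geo (X n i) (X n (i + 2)) (1 / 2) := by
        rw [hXs]; simp only [relax]; rw [if_pos (by omega)]
      have e2 : X (n + 1 + 1) (i + 1) = Geo (X (n + 1) i) (X (n + 1) (i + 2)) (1 / 2) := by
        rw [hXs]; simp only [relax]; rw [if_pos (by omega)]
      rw [e1, e2]
      have b := hcomp _ _ (hXK n) (hXK (n + 1)) i (by omega)
      have b1 := ih i (by omega)
      have b2 := ih (i + 2) (by omega)
      have hw : (w i + w (i + 2)) / 2 ≤ q * w (i + 1) := by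
        have e : (w i + w (i + 2)) / 2 = w (i + 1) - 1 := by
          simp only [w]; push_cast; ring
        have f : w (i + 1) ≤ (N : ℝ) ^ 2 := by
          simp only [w]; push_cast
          have : ((i:ℝ) + 1) ≤ N := by exact_mod_cast hi
          nlinarith [(Nat.cast_nonneg i : (0:ℝ) ≤ i)]
        have f' : w (i + 1) / (N : ℝ) ^ 2 ≤ 1 := by rw [div_le_one (by positivity)]; exact f
        rw [e]
        have : q * w (i + 1) = w (i + 1) - w (i + 1) / (N : ℝ) ^ 2 := by
          simp only [q]; ring
        linarith
      calc _ ≤ _ := b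
        _ ≤ (2 * η * w i * q ^ n + 2 * η * w (i + 2) * q ^ n) / 2 := by linarith
        _ = 2 * η * q ^ n * ((w i + w (i + 2)) / 2) := by ring
        _ ≤ 2 * η * q ^ n * (q * w (i + 1)) := by gcongr
        _ = _ := by ring
  have hlim : ∀ i, ∃ x, i ≤ N → Tendsto (fun n => X n i) atTop (𝓝 x) := by
    intro i
    by_cases hi : i ≤ N
    · obtain ⟨x, hx⟩ := cauchySeq_tendsto_of_complete
        (cauchySeq_of_le_geometric q (2 * η * w i) hq1 (fun n => hbd n i hi))
      exact ⟨x, fun _ => hx⟩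
    · exact ⟨y, fun h => absurd h hi⟩
  choose x hx using hlim
  have hxK : K x := by
    refine ⟨?_, ?_, fun i hi => ?_⟩
    · refine tendsto_nhds_unique (hx 0 (by omega)) ?_
      simp_rw [(hXK _).1]; exact tendsto_const_nhds
    · refine tendsto_nhds_unique (hx N le_rfl) ?_
      simp_rw [(hXK _).2.1]; exact tendsto_const_nhds
    · exact le_of_tendsto ((hx i hi).dist tendsto_const_nhds)
        (Eventually.of_forall fun n => (hXK n).2.2 i hi)
  refine ⟨x, hxK.1, hxK.2.1, hxK.2.2, fun i hi => ?_⟩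
  have t1 : Tendsto (fun n => X (n + 1) (i + 1)) atTop (𝓝 (x (i + 1))) :=
    (hx (i + 1) (by omega)).comp (tendsto_add_atTop_nat 1)
  refine tendsto_nhds_unique t1 ?_
  rw [tendsto_iff_dist_tendsto_zero]
  have u1 := tendsto_iff_dist_tendsto_zero.1 (hx i (by omega))
  have u2 := tendsto_iff_dist_tendsto_zero.1 (hx (i + 2) (by omega))
  have u3 := (u1.add u2).div_const 2
  simp only [add_zero, zero_div] at u3
  refine squeeze_zero (fun _ => dist_nonneg) (fun n => ?_) u3
  have e1 : X (n + 1) (i + 1) = Geo (X n i) (X n (i + 2)) (1 / 2) := by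
    rw [hXs]; simp only [relax]; rw [if_pos (by omega)]
  rw [e1]
  exact hcomp _ _ (hXK n) hxK i hi

/-- Concatenation of a chain. -/
noncomputable def concat (N : ℕ) (x : ℕ → Y) (t : ℝ) : Y :=
  Geo (x ⌊N * t⌋₊) (x (⌊N * t⌋₊ + 1)) (N * t - ⌊N * t⌋₊)

theorem seg_half1 {a b : Y} {g : ℝ → Y} (h : IsGeodesicSeg g a b) :
    IsGeodesicSeg (fun v => g (v / 2)) a (g (1 / 2)) ∧
    IsGeodesicSeg (fun v => g (1 / 2 + v / 2)) (g (1 / 2)) b := by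
  have e1 := h.2.2 0 (by simp) (1 / 2) (by norm_num)
  have e2 := h.2.2 (1 / 2) (by norm_num) 1 (by simp)
  rw [h.1] at e1
  rw [h.2.1] at e2
  refine ⟨⟨by simp [h.1], rfl, fun s hs t ht => ?_⟩, ⟨by simp, by norm_num [h.2.1], fun s hs t ht => ?_⟩⟩
  · simp only []
    rw [h.2.2 (s / 2) ⟨by linarith [hs.1], by linarith [hs.2]⟩
      (t / 2) ⟨by linarith [ht.1], by linarith [ht.2]⟩, e1, ← sub_div, abs_div]
    norm_num; ring
  · simp only []
    rw [h.2.2 (1 / 2 + s / 2) ⟨by linarith [hs.1], by linarith [hs.2]⟩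
      (1 / 2 + t / 2) ⟨by linarith [ht.1], by linarith [ht.2]⟩, e2, add_sub_add_left_eq_sub,
      ← sub_div, abs_div]
    norm_num; ring

theorem concat_spec {N : ℕ} (hN : 2 ≤ N) {x : ℕ → Y}
    (hx : ∀ i, i + 2 ≤ N → ∃ Z r, Good Z r ∧ x i ∈ ball Z (r / 3) ∧ x (i + 1) ∈ ball Z (r / 3) ∧
      x (i + 2) ∈ ball Z (r / 3))
    (hm : ∀ i, i + 2 ≤ N → x (i + 1) = Geo (x i) (x (i + 2)) (1 / 2)) :
    LocGeo (concat N x) ∧ concat N x 0 = x 0 ∧ concat N x 1 = x N ∧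
    ∀ t ∈ Icc (0:ℝ) 1, ∃ i < N, t ∈ Icc (i / N : ℝ) ((i + 1) / N) ∧
      dist (concat N x t) (x i) ≤ dist (x i) (x (i + 1)) := by
  have hNp : (0:ℝ) < N := by exact_mod_cast (by omega : 0 < N)
  have hseg : ∀ i, i + 2 ≤ N → IsGeodesicSeg (Geo (x i) (x (i + 2))) (x i) (x (i + 2)) := by
    intro i hi
    obtain ⟨Z, r, hg, h0, h1, h2⟩ := hx i hi
    exact hg.Geo3 h0 h2
  have hval : ∀ (k : ℕ) (u : ℝ), 0 ≤ u → u < 1 →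
      concat N x ((k + u) / N) = Geo (x k) (x (k + 1)) u := by
    intro k u hu0 hu1
    have e : (N:ℝ) * ((k + u) / N) = k + u := by field_simp
    have f : ⌊(k:ℝ) + u⌋₊ = k := by
      rw [Nat.floor_eq_iff (by positivity)]; constructor <;> linarith
    unfold concat
    rw [e, f]
    congr 1; ring
  have hclaim : ∀ i, i + 2 ≤ N → ∀ u, 0 ≤ u → u ≤ 2 →
      concat N x ((i + u) / N) = Geo (x i) (x (i + 2)) (u / 2) := by
    intro i hi u hu0 hu2
    obtain ⟨Z, r, hg, h0, h1, h2⟩ := hx i hi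
    have hs := hseg i hi
    obtain ⟨s1, s2⟩ := seg_half1 hs
    rw [← hm i hi] at s1 s2
    rcases lt_or_ge u 1 with hu | hu
    · rw [hval i u hu0 hu]
      exact hg.unique3 h0 h1 (hg.Geo3 h0 h1) s1 ⟨hu0, hu.le⟩
    rcases eq_or_lt_of_le hu2 with h | h
    · subst h
      have := hval (i + 2) 0 le_rfl one_pos
      rw [Geo_zero] at this
      push_cast at this
      rw [add_zero] at this
      rw [this, div_self two_ne_zero, hs.2.1]
    · have := hval (i + 1) (u - 1) (by linarith) (by linarith)
      push_cast at this
      rw [add_add_sub_cancel] at this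
      rw [this, hg.unique3 h1 h2 (hg.Geo3 h1 h2) s2 ⟨by linarith, by linarith⟩]
      congr 1; ring
  have hhalf : ∀ i, i + 2 ≤ N → dist (x i) (x (i + 1)) = dist (x i) (x (i + 2)) / 2 ∧
      dist (x (i + 1)) (x (i + 2)) = dist (x i) (x (i + 2)) / 2 := by
    intro i hi
    have hs := hseg i hi
    have e1 := hs.2.2 0 (by simp) (1 / 2) (by norm_num)
    have e2 := hs.2.2 (1 / 2) (by norm_num) 1 (by simp)
    rw [hs.1, ← hm i hi] at e1
    rw [hs.2.1, ← hm i hi] at e2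
    rw [e1, e2]
    constructor
    · rw [zero_sub, abs_neg, abs_of_pos (by norm_num)]; ring
    · rw [abs_of_neg (by norm_num)]; ring
  have hl : ∀ i, i + 1 ≤ N → dist (x i) (x (i + 1)) = dist (x 0) (x 1) := by
    intro i
    induction i with
    | zero => intro _; rfl
    | succ i ih =>
      intro hi
      rw [← ih (by omega), (hhalf i hi).1, (hhalf i hi).2]
  have main : ∀ s t : ℝ, 0 ≤ s → s ≤ t → t ≤ 1 → t - s ≤ 1 / N →
      dist (concat N x s) (concat N x t) = dist (x 0) (x 1) * N * |s - t| := by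
    intro s t hs0 hst ht hd
    rw [le_div_iff₀ hNp] at hd
    have hfl := Nat.floor_le (by positivity : 0 ≤ (N:ℝ) * s)
    have hfl2 := Nat.lt_floor_add_one ((N:ℝ) * s)
    obtain ⟨i, hi, hi1, hi2⟩ : ∃ i : ℕ, i + 2 ≤ N ∧ (i:ℝ) ≤ N * s ∧ N * t ≤ i + 2 := by
      by_cases h : ⌊(N:ℝ) * s⌋₊ + 2 ≤ N
      · refine ⟨⌊(N:ℝ) * s⌋₊, h, hfl, ?_⟩
        nlinarith
      · refine ⟨N - 2, by omega, ?_, ?_⟩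
        · have : ((N - 2 : ℕ):ℝ) ≤ ⌊(N:ℝ) * s⌋₊ := by exact_mod_cast (by omega)
          linarith
        · rw [Nat.cast_sub hN]; push_cast; nlinarith
    have e : ∀ r : ℝ, r = ((i:ℝ) + (N * r - i)) / N := by intro r; field_simp; ring
    have c1 : N * s ≤ N * t := by gcongr
    rw [e s, e t, hclaim i hi _ (by linarith) (by linarith),
      hclaim i hi _ (by linarith) (by linarith), ← e s, ← e t,
      (hseg i hi).2.2 _ ⟨by linarith, by linarith⟩ _ ⟨by linarith, by linarith⟩]
    have e2 : (N * s - i) / 2 - (N * t - i) / 2 = N / 2 * (s - t) := by ring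
    rw [e2, abs_mul, abs_of_pos (by positivity : (0:ℝ) < N / 2), ← hl i (by omega),
      (hhalf i hi).1]
    ring
  refine ⟨⟨dist (x 0) (x 1) * N, 1 / N, by positivity, fun s hs t ht hst => ?_⟩, ?_, ?_, ?_⟩
  · rcases le_total s t with h | h
    · exact main s t hs.1 h ht.2 (by rw [abs_sub_comm, abs_of_nonneg (by linarith)] at hst; exact hst)
    · rw [dist_comm, abs_sub_comm]
      exact main t s ht.1 h hs.2 (by rw [abs_of_nonneg (by linarith)] at hst; exact hst)
  · have := hval 0 0 le_rfl one_pos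
    simpa [Geo_zero] using this
  · have := hval N 0 le_rfl one_pos
    rw [add_zero, div_self hNp.ne', Geo_zero] at this
    exact this
  · intro t ht
    have hfl := Nat.floor_le (by have := ht.1; positivity : 0 ≤ (N:ℝ) * t)
    have hfl2 := Nat.lt_floor_add_one ((N:ℝ) * t)
    obtain ⟨i, hi, hi1, hi2⟩ : ∃ i : ℕ, i < N ∧ (i:ℝ) ≤ N * t ∧ N * t ≤ i + 1 := by
      by_cases h : ⌊(N:ℝ) * t⌋₊ < N
      · exact ⟨_, h, hfl, hfl2.le⟩
      · refine ⟨N - 1, by omega, ?_, ?_⟩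
        · have : ((N - 1 : ℕ):ℝ) ≤ ⌊(N:ℝ) * t⌋₊ := by exact_mod_cast (by omega)
          linarith
        · rw [Nat.cast_sub (by omega)]; push_cast; nlinarith [ht.2]
    refine ⟨i, hi, ⟨by rw [div_le_iff₀ hNp]; linarith, by rw [le_div_iff₀ hNp]; linarith⟩, ?_⟩
    have hxi : concat N x (i / N) = x i := by
      have := hval i 0 le_rfl one_pos
      rwa [add_zero, Geo_zero] at this
    have e1 : (i / N : ℝ) ≤ t := by rw [div_le_iff₀ hNp]; linarith
    have e2 : t ≤ (i + 1) / N := by rw [le_div_iff₀ hNp]; linarith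
    have := main (i / N) t (by positivity) e1 ht.2 (by rw [add_div] at e2; linarith)
    rw [hxi, dist_comm, abs_sub_comm, abs_of_nonneg (by linarith)] at this
    rw [this, hl i (by omega)]
    have e3 : N * (t - i / N) ≤ 1 := by
      have : N * (t - i / N) = N * t - i := by field_simp
      linarith
    rw [mul_assoc]
    exact mul_le_of_le_one_right dist_nonneg e3

theorem LocGeo.extend [CompleteSpace Y] (hgood : ∀ y : Y, ∃ r > 0, Good y r) {c : ℝ → Y}
    (hc : LocGeo c) : ∃ η > 0, ∀ y, dist (c 1) y < η → ∃ c' : ℝ → Y, LocGeo c' ∧ c' 0 = c 0 ∧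
      c' 1 = y ∧ ∀ t ∈ Icc (0:ℝ) 1, dist (c t) (c' t) ≤ t * dist (c 1) y := by
  have hcc := hc.continuousOn
  obtain ⟨ε, hε, hg⟩ := exists_uniform_good hgood (isCompact_Icc.image_of_continuousOn hcc)
  obtain ⟨δ', hδ', -, hu⟩ := unif_cont hcc (by positivity : 0 < ε / 6)
  have hc0 := hc
  obtain ⟨lam, δ, hδ, hLG⟩ := hc
  obtain ⟨n, hn⟩ := exists_nat_one_div_lt (by positivity : 0 < min (δ / 2) δ')
  set N := n + 2 with hNdef
  have hN : 2 ≤ N := by omega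
  have hNp : (0:ℝ) < N := by exact_mod_cast (by omega : 0 < N)
  have hNn : 1 / (N:ℝ) < min (δ / 2) δ' := by
    refine lt_of_le_of_lt ?_ hn
    apply one_div_le_one_div_of_le (by positivity)
    rw [hNdef]; push_cast; linarith
  have hN1 : 1 / (N:ℝ) < δ / 2 := hNn.trans_le (min_le_left _ _)
  have hN2 : 1 / (N:ℝ) < δ' := hNn.trans_le (min_le_right _ _)
  have hI : ∀ i ≤ N, (i / N : ℝ) ∈ Icc (0:ℝ) 1 := fun i hi =>
    ⟨by positivity, by rw [div_le_one hNp]; exact_mod_cast hi⟩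
  let z : ℕ → Y := fun i => c (i / N)
  have hz0 : z 0 = c 0 := by simp [z]
  have hzN : z N = c 1 := by simp only [z]; rw [div_self hNp.ne']
  have hgz : ∀ i ≤ N, Good (z i) ε := fun i hi => hg _ ⟨_, hI i hi, rfl⟩
  have hstep : ∀ i < N, dist (z i) (z (i + 1)) < ε / 6 := by
    intro i hi
    refine hu _ (hI i hi.le) _ (hI (i + 1) hi) ?_
    have : (i / N : ℝ) - ((i + 1 : ℕ) : ℝ) / N = -(1 / N) := by push_cast; ring
    rw [this, abs_neg, abs_of_pos (by positivity)]
    exact hN2.le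
  refine ⟨ε / 6, by positivity, fun y hy => ?_⟩
  rw [← hzN] at hy
  obtain ⟨x, hx0, hxN, hxz, hxm⟩ := chain_fixed hN hgz hstep (by
    intro i hi
    refine ⟨fun v => c ((i + 2 * v) / N), ⟨by simp [z], by simp [z], ?_⟩, by simp [z]⟩
    have hiN : (i:ℝ) + 2 ≤ N := by exact_mod_cast hi
    have key : ∀ s ∈ Icc (0:ℝ) 1, ∀ t ∈ Icc (0:ℝ) 1,
        dist (c ((i + 2 * s) / N)) (c ((i + 2 * t) / N)) = lam * (2 / N) * |s - t| := by
      intro s hs t ht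
      have e : ((i:ℝ) + 2 * s) / N - (i + 2 * t) / N = 2 / N * (s - t) := by ring
      have e' : |((i:ℝ) + 2 * s) / N - (i + 2 * t) / N| = 2 / N * |s - t| := by
        rw [e, abs_mul, abs_of_pos (by positivity)]
      rw [hLG _ ⟨by have := hs.1; positivity, by rw [div_le_one hNp]; linarith [hs.2]⟩
        _ ⟨by have := ht.1; positivity, by rw [div_le_one hNp]; linarith [ht.2]⟩, e', mul_assoc]
      rw [e']
      have : |s - t| ≤ 1 := by rw [abs_le]; constructor <;> linarith [hs.1, hs.2, ht.1, ht.2]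
      have h2 : 2 / (N:ℝ) = 2 * (1 / N) := by ring
      nlinarith [abs_nonneg (s - t), (by positivity : (0:ℝ) < 1 / N)]
    intro s hs t ht
    have h01 := key 0 (by simp) 1 (by simp)
    rw [key s hs t ht]
    simp only [mul_zero, add_zero, mul_one, zero_sub, abs_neg, abs_one] at h01
    simp only [z]
    push_cast
    rw [h01]) hy
  have hη : ∀ i ≤ N, dist (x i) (z i) < ε / 6 := by
    intro i hi
    refine lt_of_le_of_lt (hxz i hi) (lt_of_le_of_lt ?_ hy)
    exact mul_le_of_le_one_left dist_nonneg (hI i hi).2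
  obtain ⟨h1, h2, h3, h4⟩ := concat_spec hN (x := x) (by
    intro i hi
    refine ⟨z (i + 1), ε, hgz _ (by omega), ?_, ?_, ?_⟩ <;> rw [mem_ball]
    · linarith [hη i (by omega), hstep i (by omega), dist_triangle (x i) (z i) (z (i + 1))]
    · linarith [hη (i + 1) (by omega)]
    · have := hstep (i + 1) (by omega)
      rw [dist_comm] at this
      linarith [hη (i + 2) (by omega), dist_triangle (x (i + 2)) (z (i + 2)) (z (i + 1))]) hxm
  refine ⟨concat N x, h1, by rw [h2, hx0, hz0], by rw [h3, hxN], fun t ht => ?_⟩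
  have := hc0.convex h1 (fun t ht => ?_) t ht
  · rw [h2, hx0, hz0, h3, hxN, dist_self, mul_zero, zero_add] at this
    exact this
  · refine ⟨c t, ε, hg _ ⟨t, ht, rfl⟩, mem_ball_self hε, ?_⟩
    obtain ⟨i, hi, hti, hd⟩ := h4 t ht
    have a1 := hη i hi.le
    have a2 := hη (i + 1) hi
    have a3 := hstep i hi
    have a4 : dist (z i) (c t) < ε / 6 := by
      refine hu _ (hI i hi.le) t ht ?_
      rw [abs_sub_comm, abs_of_nonneg (by linarith [hti.1])]
      have := hti.2
      rw [add_div] at this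
      linarith
    have a5 := dist_triangle4 (x i) (z i) (z (i + 1)) (x (i + 1))
    rw [dist_comm (z (i + 1))] at a5
    have a6 := dist_triangle4 (concat N x t) (x i) (z i) (c t)
    rw [mem_ball]
    linarith

end CH

namespace CH
open Set Metric Filter Topology
variable {E Y : Type*} [MetricSpace E] [MetricSpace Y]

/-- local isometry, locally onto balls. -/
def LocIso (q : E → Y) : Prop :=
  ∀ e, ∃ r > 0, (∀ e' ∈ ball e r, ∀ e'' ∈ ball e r, dist (q e') (q e'') = dist e' e'') ∧
    ∀ y ∈ ball (q e) r, ∃ e' ∈ ball e r, q e' = y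

theorem LocIso.homeo {q : E → Y} (hq : LocIso q) : IsLocalHomeomorph q := by
  rw [isLocalHomeomorph_iff_isOpenEmbedding_restrict]
  intro e
  obtain ⟨r, hr, h1, h2⟩ := hq e
  refine ⟨ball e r, ball_mem_nhds e hr, ?_, ?_⟩
  · have : Isometry ((ball e r).domRestrict q) := by
      refine Isometry.of_dist_eq fun a b => ?_
      exact h1 a a.2 b b.2
    exact this.isEmbedding
  · have : range ((ball e r).domRestrict q) = ball (q e) r := by
      ext y
      constructor
      · rintro ⟨a, rfl⟩
        have := h1 a a.2 e (mem_ball_self hr)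
        change dist (q a) (q e) < r
        rw [this]; exact a.2
      · intro hy
        obtain ⟨e', he', rfl⟩ := h2 y hy
        exact ⟨⟨e', he'⟩, rfl⟩
    rw [this]; exact isOpen_ball

theorem LocIso.eqOn {q : E → Y} (hq : LocIso q) {s : Set ℝ} (hs : IsPreconnected s)
    {f g : ℝ → E} (hf : ContinuousOn f s) (hg : ContinuousOn g s) (h : ∀ x ∈ s, q (f x) = q (g x))
    {x : ℝ} (hx : x ∈ s) (hfg : f x = g x) : EqOn f g s :=
  (T2Space.isSeparatedMap q).eqOn_of_comp_eqOn hq.homeo.isLocallyInjective hs hf hg h hx hfg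

/-- A lift of `σ` on `[0,s]`. -/
def IsLift (q : E → Y) (σ : ℝ → Y) (L : ℝ) (e0 : E) (s : ℝ) (Γ : ℝ → E) : Prop :=
  Γ 0 = e0 ∧ (∀ u ∈ Icc 0 s, q (Γ u) = σ u) ∧
    ∀ u ∈ Icc 0 s, ∀ v ∈ Icc 0 s, dist (Γ u) (Γ v) ≤ L * |u - v|

theorem contOn_of_lip {Γ : ℝ → E} {s : Set ℝ} {L : ℝ} (hL : 0 ≤ L)
    (h : ∀ u ∈ s, ∀ v ∈ s, dist (Γ u) (Γ v) ≤ L * |u - v|) : ContinuousOn Γ s := by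
  have : LipschitzOnWith ⟨L, hL⟩ Γ s := LipschitzOnWith.of_dist_le_mul fun u hu v hv => h u hu v hv
  exact this.continuousOn

theorem IsLift.mono {q : E → Y} {σ : ℝ → Y} {L : ℝ} {e0 : E} {s s' : ℝ} {Γ : ℝ → E}
    (h : IsLift q σ L e0 s Γ) (hs : s' ≤ s) : IsLift q σ L e0 s' Γ :=
  ⟨h.1, fun u hu => h.2.1 u ⟨hu.1, hu.2.trans hs⟩, fun u hu v hv =>
    h.2.2 u ⟨hu.1, hu.2.trans hs⟩ v ⟨hv.1, hv.2.trans hs⟩⟩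

theorem IsLift.unique {q : E → Y} (hq : LocIso q) {σ : ℝ → Y} {L : ℝ} (hL : 0 ≤ L) {e0 : E} {s : ℝ}
    (hs : 0 ≤ s) {Γ Γ' : ℝ → E}
    (h : IsLift q σ L e0 s Γ) (h' : IsLift q σ L e0 s Γ') : EqOn Γ Γ' (Icc 0 s) :=
  hq.eqOn isPreconnected_Icc (contOn_of_lip hL h.2.2) (contOn_of_lip hL h'.2.2)
    (fun x hx => (h.2.1 x hx).trans (h'.2.1 x hx).symm) ⟨le_rfl, hs⟩ (h.1.trans h'.1.symm)

theorem IsLift.step {q : E → Y} (hq : LocIso q) {σ : ℝ → Y} {L : ℝ} (hL : 0 ≤ L)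
    (hσ : ∀ u ∈ Icc (0:ℝ) 1, ∀ v ∈ Icc (0:ℝ) 1, dist (σ u) (σ v) ≤ L * |u - v|) {e0 : E} {s y : ℝ}
    (hs : 0 ≤ s) (hs1 : s < 1) (hy : s < y) {Γ : ℝ → E}
    (h : IsLift q σ L e0 s Γ) : ∃ s' ∈ Ioc s y, ∃ Γ', IsLift q σ L e0 s' Γ' := by
  have : Nonempty E := ⟨e0⟩
  obtain ⟨r, hr, h1, h2⟩ := hq (Γ s)
  have hss : s ∈ Icc 0 s := ⟨hs, le_rfl⟩
  set k := min (min (y - s) (1 - s)) (r / (L + 1)) with hk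
  have hkp : 0 < k := by
    have : 0 < y - s := by linarith
    have : 0 < 1 - s := by linarith
    positivity
  have hk1 : k ≤ y - s := (min_le_left _ _).trans (min_le_left _ _)
  have hk2 : k ≤ 1 - s := (min_le_left _ _).trans (min_le_right _ _)
  have hk3 : L * k < r := by
    have : k ≤ r / (L + 1) := min_le_right _ _
    rw [le_div_iff₀ (by positivity)] at this
    nlinarith
  have hex : ∀ u, u ∈ Icc s (s + k) → ∃ e' ∈ ball (Γ s) r, q e' = σ u := by
    intro u hu
    apply h2
    rw [mem_ball, h.2.1 s hss]
    refine (hσ u ⟨by linarith [hu.1], by linarith [hu.2]⟩ s ⟨hs, hs1.le⟩).trans_lt ?_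
    rw [abs_of_nonneg (by linarith [hu.1])]
    nlinarith [hu.2]
  choose! G hG1 hG2 using hex
  have hGs : G s = Γ s := by
    have hs' : s ∈ Icc s (s + k) := ⟨le_rfl, by linarith⟩
    have := h1 _ (hG1 s hs') _ (mem_ball_self hr)
    rw [hG2 s hs', h.2.1 s hss, dist_self] at this
    exact dist_eq_zero.1 this.symm
  have hGl : ∀ u ∈ Icc s (s + k), ∀ v ∈ Icc s (s + k), dist (G u) (G v) ≤ L * |u - v| := by
    intro u hu v hv
    rw [← h1 _ (hG1 u hu) _ (hG1 v hv), hG2 u hu, hG2 v hv]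
    exact hσ u ⟨by linarith [hu.1], by linarith [hu.2]⟩ v ⟨by linarith [hv.1], by linarith [hv.2]⟩
  have hmix : ∀ u ∈ Icc 0 s, ∀ v ∈ Icc s (s + k), dist (Γ u) (G v) ≤ L * |u - v| := by
    intro u hu v hv
    have a1 := h.2.2 u hu s hss
    have a2 := hGl s ⟨le_rfl, by linarith⟩ v hv
    rw [hGs] at a2
    rw [abs_of_nonpos (by linarith [hu.2])] at a1
    rw [abs_of_nonpos (by linarith [hv.1])] at a2
    rw [abs_of_nonpos (by linarith [hv.1, hu.2])]
    calc _ ≤ _ := dist_triangle _ (Γ s) _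
      _ ≤ _ := add_le_add a1 a2
      _ = _ := by ring
  refine ⟨s + k, ⟨by linarith, by linarith⟩, fun u => if u ≤ s then Γ u else G u, ?_, ?_, ?_⟩
  · simp [hs, h.1]
  · intro u hu
    dsimp only
    split_ifs with hus
    · exact h.2.1 u ⟨hu.1, hus⟩
    · exact hG2 u ⟨(not_le.1 hus).le, hu.2⟩
  · intro u hu v hv
    dsimp only
    split_ifs with hus hvs hvs
    · exact h.2.2 u ⟨hu.1, hus⟩ v ⟨hv.1, hvs⟩
    · exact hmix u ⟨hu.1, hus⟩ v ⟨(not_le.1 hvs).le, hv.2⟩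
    · rw [dist_comm, abs_sub_comm]
      exact hmix v ⟨hv.1, hvs⟩ u ⟨(not_le.1 hus).le, hu.2⟩
    · exact hGl u ⟨(not_le.1 hus).le, hu.2⟩ v ⟨(not_le.1 hvs).le, hv.2⟩

theorem IsLift.limit [CompleteSpace E] {q : E → Y} (hq : LocIso q) {σ : ℝ → Y} {L : ℝ} (hL : 0 ≤ L)
    (hσ : ∀ u ∈ Icc (0:ℝ) 1, ∀ v ∈ Icc (0:ℝ) 1, dist (σ u) (σ v) ≤ L * |u - v|) {e0 : E} {s : ℝ}
    (hs : 0 < s) (hs1 : s ≤ 1) (h : ∀ u, 0 ≤ u → u < s → ∃ Γ, IsLift q σ L e0 u Γ) :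
    ∃ Γ, IsLift q σ L e0 s Γ := by
  have : Nonempty E := ⟨e0⟩
  choose! G hG using h
  have hagree : ∀ u v, 0 ≤ u → u ≤ v → v < s → G v u = G u u := by
    intro u v hu huv hv
    exact ((hG v (hu.trans huv) hv).mono huv).unique hq hL hu (hG u hu (huv.trans_lt hv)) ⟨hu, le_rfl⟩
  have hl' : ∀ u v, 0 ≤ u → u ≤ v → v < s → dist (G u u) (G v v) ≤ L * |u - v| := by
    intro u v hu huv hv
    rw [← hagree u v hu huv hv]
    exact (hG v (hu.trans huv) hv).2.2 u ⟨hu, huv⟩ v ⟨hu.trans huv, le_rfl⟩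
  have hl : ∀ u ∈ Ico 0 s, ∀ v ∈ Ico 0 s, dist (G u u) (G v v) ≤ L * |u - v| := by
    intro u hu v hv
    rcases le_total u v with huv | huv
    · exact hl' u v hu.1 huv hv.2
    · rw [dist_comm, abs_sub_comm]; exact hl' v u hv.1 huv hu.2
  set x : ℕ → ℝ := fun n => s - s / (n + 1) with hx
  have hxI : ∀ n, x n ∈ Ico 0 s := by
    intro n
    have : 0 < s / ((n:ℝ) + 1) := by positivity
    have : s / ((n:ℝ) + 1) ≤ s := div_le_self hs.le (by linarith [(Nat.cast_nonneg n : (0:ℝ) ≤ n)])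
    exact ⟨by simp only [hx]; linarith, by simp only [hx]; linarith⟩
  have hxt : Tendsto x atTop (𝓝 s) := by
    have := (tendsto_one_div_add_atTop_nhds_zero_nat (𝕜 := ℝ)).const_mul s
    have := this.const_sub s
    simpa [hx, div_eq_mul_inv] using this
  have hcau : CauchySeq (fun n => G (x n) (x n)) := by
    have h1 : CauchySeq x := hxt.cauchySeq
    rw [Metric.cauchySeq_iff] at h1 ⊢
    intro ε hε
    obtain ⟨N, hN⟩ := h1 (ε / (L + 1)) (by positivity)
    refine ⟨N, fun m hm n hn => (hl _ (hxI m) _ (hxI n)).trans_lt ?_⟩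
    have := hN m hm n hn
    rw [Real.dist_eq, lt_div_iff₀ (by positivity)] at this
    nlinarith [abs_nonneg (x m - x n)]
  obtain ⟨e, he⟩ := cauchySeq_tendsto_of_complete hcau
  have hle : ∀ u ∈ Ico 0 s, dist (G u u) e ≤ L * |u - s| := by
    intro u hu
    refine le_of_tendsto_of_tendsto' (tendsto_const_nhds.dist he)
      (((tendsto_const_nhds.sub hxt).abs).const_mul L) fun n => hl u hu _ (hxI n)
  have hqe : q e = σ s := by
    have h1 := (hq.homeo.continuous.tendsto e).comp he
    have h2 : Tendsto (fun n => σ (x n)) atTop (𝓝 (σ s)) := by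
      have := (contOn_of_lip hL hσ) s ⟨hs.le, hs1⟩
      refine this.tendsto.comp (tendsto_nhdsWithin_iff.2 ⟨hxt, Eventually.of_forall fun n => ?_⟩)
      exact ⟨(hxI n).1, (hxI n).2.le.trans hs1⟩
    refine tendsto_nhds_unique h1 (h2.congr fun n => ?_)
    exact ((hG _ (hxI n).1 (hxI n).2).2.1 _ ⟨(hxI n).1, le_rfl⟩).symm
  refine ⟨fun u => if u < s then G u u else e, ?_, ?_, ?_⟩
  · simp only [hs, if_true]; exact (hG 0 le_rfl hs).1
  · intro u hu
    dsimp only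
    split_ifs with hus
    · exact (hG u hu.1 hus).2.1 u ⟨hu.1, le_rfl⟩
    · rw [le_antisymm hu.2 (not_lt.1 hus)]; exact hqe
  · intro u hu v hv
    dsimp only
    split_ifs with hus hvs hvs
    · exact hl u ⟨hu.1, hus⟩ v ⟨hv.1, hvs⟩
    · rw [le_antisymm hv.2 (not_lt.1 hvs)]; exact hle u ⟨hu.1, hus⟩
    · rw [le_antisymm hu.2 (not_lt.1 hus), dist_comm, abs_sub_comm]; exact hle v ⟨hv.1, hvs⟩
    · rw [dist_self]; positivity

theorem LocIso.lift_lip [CompleteSpace E] {q : E → Y} (hq : LocIso q) {σ : ℝ → Y} {L : ℝ}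
    (hL : 0 ≤ L)
    (hσ : ∀ u ∈ Icc (0:ℝ) 1, ∀ v ∈ Icc (0:ℝ) 1, dist (σ u) (σ v) ≤ L * |u - v|) {e0 : E}
    (h0 : q e0 = σ 0) : ∃ Γ, IsLift q σ L e0 1 Γ := by
  have base : ∃ Γ, IsLift q σ L e0 0 Γ := by
    refine ⟨fun _ => e0, rfl, fun u hu => ?_, fun u _ v _ => ?_⟩
    · rw [Icc_self, mem_singleton_iff] at hu; rw [hu, h0]
    · rw [dist_self]; positivity
  have key : Icc (0:ℝ) 1 ⊆ {s | ∃ Γ, IsLift q σ L e0 s Γ} := by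
    refine IsClosed.Icc_subset_of_forall_exists_gt ?_ base ?_
    · refine isClosed_of_closure_subset fun s hs => ?_
      have hs1 : s ∈ Icc (0:ℝ) 1 := by
        have := closure_mono inter_subset_right hs
        rwa [isClosed_Icc.closure_eq] at this
      refine ⟨?_, hs1⟩
      rcases hs1.1.eq_or_lt with h | h
      · rw [← h]; exact base
      · refine IsLift.limit hq hL hσ h hs1.2 fun u hu hus => ?_
        rw [_root_.mem_closure_iff] at hs
        obtain ⟨v, hv1, ⟨Γ, hΓ⟩, _⟩ := hs (Ioi u) isOpen_Ioi hus
        exact ⟨Γ, hΓ.mono (le_of_lt hv1)⟩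
    · rintro s ⟨⟨Γ, hΓ⟩, hs⟩ y hy
      obtain ⟨s', hs', Γ', hΓ'⟩ := hΓ.step hq hL hσ hs.1 hs.2 hy
      exact ⟨s', ⟨Γ', hΓ'⟩, hs'⟩
  exact key ⟨zero_le_one, le_rfl⟩

end CH

namespace CH
open Set Metric Filter Topology unitInterval
variable {E Y : Type*} [MetricSpace E] [MetricSpace Y]

theorem LocIso.exists_section [CompleteSpace E] {q : E → Y} (hq : LocIso q) {z : Y} {r : ℝ}
    (hg : Good z r) {e0 : E} (he : q e0 ∈ ball z r) :
    ∃ s : Y → E, ContinuousOn s (ball z r) ∧ (∀ y ∈ ball z r, q (s y) = y) ∧ s (q e0) = e0 := by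
  have h1 : ∀ x : ball z r, ∃ γ : ℝ → Y, γ 0 = q e0 ∧ γ 1 = x ∧ IsGeodesicIn (ball z r) γ :=
    fun x => hg.1 _ he _ x.2
  choose γ g0 g1 gg using h1
  choose gin lam glam using gg
  have hlam : ∀ x : ball z r, lam x = dist (q e0) x := by
    intro x
    have := glam x 0 (by simp) 1 (by simp)
    rw [g0, g1] at this
    simpa using this.symm
  have hlift : ∀ x : ball z r, ∃ Γ, IsLift q (γ x) (lam x) e0 1 Γ := by
    intro x
    refine hq.lift_lip (by rw [hlam]; exact dist_nonneg) (fun u hu v hv => (glam x u hu v hv).le) ?_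
    rw [g0]
  choose Γ hΓ using hlift
  have hf : Continuous (fun p : I × ball z r => γ p.2 p.1) := by
    refine continuous_prod_of_continuous_lipschitzWith' _ 1 (fun t => ?_) (fun x => ?_)
    · refine LipschitzWith.of_dist_le_mul fun x y => ?_
      have := hg.2 (γ x) (γ y) ⟨gin x, lam x, glam x⟩ ⟨gin y, lam y, glam y⟩ t t.2
      rw [g0, g0, g1, g1, dist_self, mul_zero, zero_add] at this
      refine this.trans ?_
      rw [NNReal.coe_one]
      exact mul_le_mul_of_nonneg_right t.2.2 dist_nonneg
    · have : LocGeo (γ x) := geoIn_LocGeo ⟨gin x, lam x, glam x⟩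
      exact this.continuousOn.comp_continuous continuous_subtype_val (fun t => t.2)
  have hG : Continuous (fun p : I × ball z r => Γ p.2 p.1) := by
    refine hq.homeo.continuous_lift (T2Space.isSeparatedMap q) ⟨_, hf⟩ ?_ ?_ ?_
    · ext p
      exact (hΓ p.2).2.1 p.1 p.1.2
    · have : (fun x : ball z r => Γ x ((0 : I) : ℝ)) = fun _ => e0 := by
        ext x; exact (hΓ x).1
      dsimp only
      rw [this]; exact continuous_const
    · intro x
      have : ContinuousOn (Γ x) (Icc 0 1) :=
        contOn_of_lip (by rw [hlam]; exact dist_nonneg) (hΓ x).2.2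
      exact this.comp_continuous continuous_subtype_val (fun t => t.2)
  classical
  refine ⟨fun y => if h : y ∈ ball z r then Γ ⟨y, h⟩ 1 else e0, ?_, ?_, ?_⟩
  · rw [continuousOn_iff_continuous_domRestrict]
    have h2 : Continuous (fun x : ball z r => Γ x ((1 : I) : ℝ)) :=
      hG.comp (Continuous.prodMk_right (1 : I))
    refine h2.congr fun x => ?_
    have := x.2
    simp [Set.domRestrict]
  · intro y hy
    simp only [hy, dif_pos]
    rw [(hΓ ⟨y, hy⟩).2.1 1 (by simp), g1]
  · simp only [he, dif_pos]
    have h3 := (hΓ ⟨_, he⟩).2.2 1 (by simp) 0 (by simp)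
    rw [hlam, (hΓ ⟨_, he⟩).1] at h3
    simp only [dist_self, zero_mul] at h3
    exact dist_le_zero.1 h3

theorem LocIso.path_lifts [CompleteSpace E] {q : E → Y} (hq : LocIso q)
    (hgood : ∀ y : Y, ∃ r > 0, Good y r) (γ : C(I, Y)) (e : E) (γ_0 : γ 0 = q e) :
    ∃ Γ : C(I, E), (∀ t, q (Γ t) = γ t) ∧ Γ 0 = e := by
  choose r hr hg using hgood
  obtain ⟨t, t_0, t_mono, ⟨n_max, h_max⟩, t_sub⟩ :=
    exists_monotone_Icc_subset_open_cover_unitInterval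
    (fun x : Y ↦ (isOpen_ball (x := x) (ε := r x)).preimage γ.continuous)
    fun t _ ↦ Set.mem_iUnion.2 ⟨γ t, mem_ball_self (hr _)⟩
  suffices ∀ n, ∃ Γ : I → E, ContinuousOn Γ (Set.Icc 0 (t n)) ∧
      (∀ s ∈ Set.Icc 0 (t n), q (Γ s) = γ s) ∧ Γ 0 = e by
    obtain ⟨Γ, cont, eqOn, Γ_0⟩ := this n_max
    rw [h_max _ le_rfl] at cont eqOn
    exact ⟨⟨Γ, continuousOn_univ.mp
      (by convert! cont; rw [eq_comm, Set.eq_univ_iff_forall]; exact fun t ↦ ⟨bot_le, le_top⟩)⟩,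
      fun _ ↦ eqOn _ ⟨bot_le, le_top⟩, Γ_0⟩
  intro n
  induction n with
  | zero =>
    refine ⟨fun _ ↦ e, continuous_const.continuousOn, fun t ht ↦ ?_, rfl⟩
    rw [t_0, Set.Icc_self, Set.mem_singleton_iff] at ht; subst ht; exact γ_0.symm
  | succ n ih => ?_
  obtain ⟨Γ, cont, eqOn, Γ_0⟩ := ih
  obtain ⟨x, t_sub⟩ := t_sub n
  have pΓtn : q (Γ (t n)) = γ (t n) := eqOn _ ⟨t_0 ▸ t_mono n.zero_le, le_rfl⟩
  have hm : q (Γ (t n)) ∈ ball x (r x) := by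
    rw [pΓtn]; exact t_sub ⟨le_rfl, t_mono n.le_succ⟩
  obtain ⟨S, hS1, hS2, hS3⟩ := hq.exists_section (hg x) hm
  refine ⟨fun s ↦ if s ≤ t n then Γ s else S (γ s),
    .if (fun s hs ↦ ?_) (cont.mono fun _ h ↦ ?_) ?_, fun s hs ↦ ?_, ?_⟩
  · cases frontier_Iic_subset _ hs.2
    rw [← pΓtn, hS3]
  · rw [closure_le_eq continuous_id' continuous_const] at h; exact ⟨h.1.1, h.2⟩
  · apply hS1.comp γ.2.continuousOn
    simp_rw [not_le]; intro s h
    exact t_sub ⟨closure_lt_subset_le continuous_const continuous_subtype_val h.2, h.1.2⟩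
  · dsimp only
    split_ifs with h
    exacts [eqOn _ ⟨hs.1, h⟩, hS2 _ (t_sub ⟨le_of_not_ge h, hs.2⟩)]
  · dsimp only; rwa [if_pos (t_0 ▸ t_mono n.zero_le)]

theorem chain_bound {E Z : Type*} [MetricSpace E] [MetricSpace Z] {q : E → Z} {F : E → E → ℝ}
    (hF : ∀ x y z, F x z ≤ F x y + F y z) (hF0 : ∀ x, F x x ≤ 0) {K : ℝ}
    (hloc : ∀ e, ∃ ε > 0, ∀ e' ∈ ball e ε, ∀ e'' ∈ ball e ε, F e' e'' ≤ K * dist (q e') (q e''))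
    (hK : 0 ≤ K) {Γ : ℝ → E} (hΓ : ContinuousOn Γ (Icc 0 1)) {τ : ℝ → Z}
    (hσ : ∀ s ∈ Icc (0:ℝ) 1, q (Γ s) = τ s) (hfin : eVariationOn τ (Icc 0 1) ≠ ⊤) :
    F (Γ 0) (Γ 1) ≤ K * (eVariationOn τ (Icc 0 1)).toReal := by
  choose ε hε hl using hloc
  obtain ⟨ε0, hε0, hL⟩ := lebesgue_number_lemma_of_metric (c := fun y => ball y (ε y))
    (isCompact_Icc.image_of_continuousOn hΓ)
    (fun y => isOpen_ball) (fun y _ => mem_iUnion.2 ⟨y, mem_ball_self (hε y)⟩)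
  obtain ⟨δ, hδ, hδ1, hu⟩ := unif_cont hΓ hε0
  obtain ⟨n, hn⟩ := exists_nat_one_div_lt hδ
  set u : ℕ → ℝ := fun i => min (i / ((n:ℝ) + 1)) 1 with hudef
  have hn1 : 0 < (n:ℝ) + 1 := by positivity
  have humono : Monotone u := fun i j hij => min_le_min_right _ (by gcongr)
  have huI : ∀ i, u i ∈ Icc (0:ℝ) 1 := fun i => ⟨by positivity, min_le_right _ _⟩
  have hustep : ∀ i, |u i - u (i + 1)| ≤ δ := by
    intro i
    rw [abs_sub_comm]
    refine (abs_min_sub_min_le_max _ _ _ _).trans ?_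
    rw [sub_self, abs_zero]
    refine max_le ?_ hδ.le
    have : ((i + 1 : ℕ) : ℝ) / ((n:ℝ) + 1) - i / ((n:ℝ) + 1) = 1 / ((n:ℝ) + 1) := by
      push_cast; ring
    rw [this, abs_of_nonneg (by positivity)]
    exact hn.le
  have hind : ∀ m, F (Γ (u 0)) (Γ (u m)) ≤
      ∑ i ∈ Finset.range m, K * dist (τ (u (i + 1))) (τ (u i)) := by
    intro m
    induction m with
    | zero => simpa using hF0 _
    | succ m ih =>
      rw [Finset.sum_range_succ]
      refine (hF _ (Γ (u m)) _).trans (add_le_add ih ?_)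
      obtain ⟨e, he⟩ := hL (Γ (u m)) (mem_image_of_mem _ (huI m))
      have := hl e (Γ (u m)) (he (mem_ball_self hε0)) (Γ (u (m + 1))) (he ?_)
      · rwa [hσ _ (huI _), hσ _ (huI _), dist_comm] at this
      · rw [mem_ball, dist_comm]; exact hu _ (huI _) _ (huI _) (hustep m)
  have h0 : u 0 = 0 := by simp [hudef]
  have h1 : u (n + 1) = 1 := by
    simp only [hudef]; push_cast; rw [div_self hn1.ne']; simp
  have := hind (n + 1)
  rw [h0, h1] at this
  refine this.trans ?_
  rw [← Finset.mul_sum]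
  refine mul_le_mul_of_nonneg_left ?_ hK
  have hs := eVariationOn.sum_le (f := τ) (s := Icc 0 1) (n := n + 1) humono huI
  have h2 := ENNReal.toReal_mono hfin hs
  rw [ENNReal.toReal_sum (fun i _ => edist_ne_top _ _)] at h2
  simpa [edist_dist, ENNReal.toReal_ofReal] using h2

theorem LocIso.endpoint_unique [CompleteSpace E] [SimplyConnectedSpace Y] {q : E → Y}
    (hq : LocIso q) (hgood : ∀ y : Y, ∃ r > 0, Good y r) (Γ Γ' : C(I, E)) (h0 : Γ 0 = Γ' 0)
    (h1 : q (Γ 1) = q (Γ' 1)) : Γ 1 = Γ' 1 := by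
  have hc := hq.homeo.continuous
  let P : Path (q (Γ 0)) (q (Γ 1)) := ⟨⟨fun t => q (Γ t), hc.comp Γ.continuous⟩, rfl, rfl⟩
  let P' : Path (q (Γ 0)) (q (Γ 1)) :=
    ⟨⟨fun t => q (Γ' t), hc.comp Γ'.continuous⟩, by simp [h0], by simp [h1]⟩
  obtain ⟨H⟩ := SimplyConnectedSpace.paths_homotopic P P'
  have hex : ∀ t : I, ∃ G : C(I, E), (∀ s, q (G s) = H (t, s)) ∧ G 0 = Γ 0 := by
    intro t
    have := hq.path_lifts hgood ⟨fun s => H (t, s), by fun_prop⟩ (Γ 0) ?_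
    · exact this
    · simp
  choose G hG hG0 using hex
  have key := hq.homeo.monodromy_theorem (T2Space.isSeparatedMap q) H G hG
    (fun t => by rw [hG0, hG0]) 1
  have e0 : G 0 = Γ := by
    refine DFunLike.coe_injective ?_
    refine (T2Space.isSeparatedMap q).eq_of_comp_eq hq.homeo.isLocallyInjective
      (G 0).continuous Γ.continuous ?_ 0 (hG0 0)
    ext s
    simp only [Function.comp, hG]
    exact H.apply_zero s
  have e1 : G 1 = Γ' := by
    refine DFunLike.coe_injective ?_
    refine (T2Space.isSeparatedMap q).eq_of_comp_eq hq.homeo.isLocallyInjective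
      (G 1).continuous Γ'.continuous ?_ 0 ((hG0 1).trans h0)
    ext s
    simp only [Function.comp, hG]
    exact H.apply_one s
  rw [e0, e1] at key
  exact key.symm

end CH

namespace CH
open Set Metric Filter Topology
variable {Y : Type*} [MetricSpace Y]

/-- extension of a path on the unit interval to the line -/
noncomputable def ex (c : C(unitInterval, Y)) : ℝ → Y := IccExtend zero_le_one c

theorem ex_of_mem (c : C(unitInterval, Y)) {t : ℝ} (ht : t ∈ Icc (0:ℝ) 1) : ex c t = c ⟨t, ht⟩ :=
  IccExtend_of_mem _ _ ht

theorem ex_coe (c : C(unitInterval, Y)) (t : unitInterval) : ex c t = c t := ex_of_mem c t.2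
theorem ex_zero (c : C(unitInterval, Y)) : ex c 0 = c 0 := ex_coe c 0
theorem ex_one (c : C(unitInterval, Y)) : ex c 1 = c 1 := ex_coe c 1

/-- local geodesics starting at `a` -/
def LGS (a : Y) : Set C(unitInterval, Y) := {c | LocGeo (ex c) ∧ c 0 = a}

theorem LocGeo.congr {f g : ℝ → Y} (h : LocGeo f) (hfg : EqOn f g (Icc 0 1)) : LocGeo g := by
  obtain ⟨lam, δ, hδ, h⟩ := h
  refine ⟨lam, δ, hδ, fun s hs t ht hst => ?_⟩
  rw [← hfg hs, ← hfg ht]; exact h s hs t ht hst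

/-- continuous map from a local geodesic -/
def toC (f : ℝ → Y) (hf : LocGeo f) : C(unitInterval, Y) :=
  ⟨fun t => f t, hf.continuousOn.comp_continuous continuous_subtype_val (fun t => t.2)⟩

theorem ex_toC (f : ℝ → Y) (hf : LocGeo f) : EqOn f (ex (toC f hf)) (Icc 0 1) :=
  fun t ht => by rw [ex_of_mem _ ht]; rfl

/-- element of `LGS` -/
def mk (f : ℝ → Y) (hf : LocGeo f) (a : Y) (ha : f 0 = a) : LGS a :=
  ⟨toC f hf, hf.congr (ex_toC f hf), ha⟩

theorem ex_mk (f : ℝ → Y) (hf : LocGeo f) (a : Y) (ha : f 0 = a) {t : ℝ} (ht : t ∈ Icc (0:ℝ) 1) :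
    ex (mk f hf a ha).1 t = f t := (ex_toC f hf ht).symm

/-- exponential map -/
def xp {a : Y} (c : LGS a) : Y := c.1 1

theorem ex_at_one {a : Y} (c : LGS a) : ex c.1 1 = xp c := ex_one _
theorem ex_at_zero {a : Y} (c : LGS a) : ex c.1 0 = a := (ex_zero _).trans c.2.2

theorem dist_ex {a : Y} (c c' : LGS a) {t : ℝ} (ht : t ∈ Icc (0:ℝ) 1) :
    dist (ex c.1 t) (ex c'.1 t) ≤ dist c c' := by
  rw [ex_of_mem _ ht, ex_of_mem _ ht]; exact ContinuousMap.dist_apply_le_dist _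

theorem dist_LGS_le {a : Y} (c c' : LGS a) {C : ℝ} (hC : 0 ≤ C)
    (h : ∀ t ∈ Icc (0:ℝ) 1, dist (ex c.1 t) (ex c'.1 t) ≤ C) : dist c c' ≤ C := by
  refine (ContinuousMap.dist_le hC).2 fun t => ?_
  have := h t t.2
  rwa [ex_coe, ex_coe] at this

theorem LGS_closed (hgood : ∀ y : Y, ∃ r > 0, Good y r) (a : Y) : IsClosed (LGS a) := by
  refine IsSeqClosed.isClosed fun F f hF hlim => ⟨?_, ?_⟩
  · refine LocGeo.of_limit hgood (F := fun n => ex (F n)) (fun n => (hF n).1)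
      ((map_continuous f).Icc_extend'.continuousOn) fun ε hε => ?_
    rw [Metric.tendsto_atTop] at hlim
    obtain ⟨N, hN⟩ := hlim ε hε
    refine eventually_atTop.2 ⟨N, fun n hn t ht => ?_⟩
    rw [ex_of_mem _ ht, ex_of_mem _ ht]
    exact (ContinuousMap.dist_apply_le_dist _).trans_lt (hN n hn)
  · have h1 : Tendsto (fun n => F n 0) atTop (𝓝 (f 0)) :=
      ((continuous_eval_const (0 : unitInterval)).tendsto f).comp hlim
    refine tendsto_nhds_unique h1 ?_
    simp_rw [(hF _).2]
    exact tendsto_const_nhds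

theorem LGS_complete [CompleteSpace Y] (hgood : ∀ y : Y, ∃ r > 0, Good y r) (a : Y) :
    CompleteSpace (LGS a) := (LGS_closed hgood a).completeSpace_coe

theorem near (hgood : ∀ y : Y, ∃ r > 0, Good y r) {a : Y} (c : LGS a) :
    ∃ ε > 0, ∀ c' ∈ ball c ε, ∀ c'' ∈ ball c ε, ∀ t ∈ Icc (0:ℝ) 1,
      dist (ex c'.1 t) (ex c''.1 t) ≤ t * dist (xp c') (xp c'') := by
  obtain ⟨ε, hε, hg⟩ := exists_uniform_good hgood
    (isCompact_Icc.image_of_continuousOn c.2.1.continuousOn)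
  refine ⟨ε, hε, fun c' hc' c'' hc'' t ht => ?_⟩
  have := LocGeo.convex c'.2.1 c''.2.1 (fun t ht => ⟨ex c.1 t, ε, hg _ (mem_image_of_mem _ ht),
    (dist_ex _ _ ht).trans_lt hc', (dist_ex _ _ ht).trans_lt hc''⟩) t ht
  rwa [ex_at_zero, ex_at_zero, ex_at_one, ex_at_one, dist_self, mul_zero, zero_add] at this

theorem xp_locIso [CompleteSpace Y] (hgood : ∀ y : Y, ∃ r > 0, Good y r) (a : Y) :
    LocIso (xp (a := a)) := by
  intro c
  obtain ⟨ε, hε, hn⟩ := near hgood c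
  obtain ⟨η, hη, hx⟩ := c.2.1.extend hgood
  refine ⟨min ε η, by positivity, fun c' hc' c'' hc'' => le_antisymm ?_ ?_, fun y hy => ?_⟩
  · have := dist_ex c' c'' (t := 1) (by simp)
    rwa [ex_at_one, ex_at_one] at this
  · refine dist_LGS_le _ _ dist_nonneg fun t ht => ?_
    refine (hn c' (ball_subset_ball (min_le_left _ _) hc') c''
      (ball_subset_ball (min_le_left _ _) hc'') t ht).trans ?_
    exact mul_le_of_le_one_left dist_nonneg ht.2
  · rw [mem_ball, dist_comm] at hy
    obtain ⟨f, hf, h0, h1, hd⟩ := hx y (by rw [ex_at_one]; exact hy.trans_le (min_le_right _ _))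
    rw [ex_at_zero] at h0
    refine ⟨mk f hf a h0, ?_, ?_⟩
    · rw [mem_ball, dist_comm]
      refine (dist_LGS_le _ _ (dist_nonneg (x := xp c) (y := y)) fun t ht => ?_).trans_lt hy
      rw [ex_mk _ _ _ _ ht]
      refine (hd t ht).trans ?_
      rw [ex_at_one]
      exact mul_le_of_le_one_left dist_nonneg ht.2
    · rw [← ex_at_one, ex_mk _ _ _ _ (by simp), h1]

theorem shrink {a : Y} (c : LGS a) (s : unitInterval) :
    (⟨fun t => c.1 (s * t), by fun_prop⟩ : C(unitInterval, Y)) ∈ LGS a := by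
  obtain ⟨lam, δ, hδ, h⟩ := c.2.1
  refine ⟨⟨lam * s, δ, hδ, fun u hu v hv huv => ?_⟩, ?_⟩
  · rw [ex_of_mem _ hu, ex_of_mem _ hv]
    have h1 := h (s * u) ⟨mul_nonneg s.2.1 hu.1, mul_le_one₀ s.2.2 hu.1 hu.2⟩
      (s * v) ⟨mul_nonneg s.2.1 hv.1, mul_le_one₀ s.2.2 hv.1 hv.2⟩ ?_
    · rw [ex_of_mem _ ⟨mul_nonneg s.2.1 hu.1, mul_le_one₀ s.2.2 hu.1 hu.2⟩,
        ex_of_mem _ ⟨mul_nonneg s.2.1 hv.1, mul_le_one₀ s.2.2 hv.1 hv.2⟩, ← mul_sub, abs_mul,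
        abs_of_nonneg s.2.1, ← mul_assoc] at h1
      exact h1
    · rw [← mul_sub, abs_mul, abs_of_nonneg s.2.1]
      exact (mul_le_of_le_one_left (abs_nonneg _) s.2.2).trans huv
  · change c.1 (s * 0) = a
    rw [mul_zero]; exact c.2.2

theorem exists_contract {a : Y} (c : LGS a) : ∃ Γ : C(unitInterval, LGS a),
    (∀ t, (Γ 0).1 t = a) ∧ Γ 1 = c := by
  let F : C(unitInterval × unitInterval, Y) := ⟨fun p => c.1 (p.1 * p.2), by fun_prop⟩
  refine ⟨⟨fun s => ⟨F.curry s, shrink c s⟩, ?_⟩, ?_, ?_⟩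
  · exact Continuous.subtype_mk (F.curry.continuous) _
  · intro t
    change c.1 (0 * t) = a
    rw [zero_mul]; exact c.2.2
  · apply Subtype.ext
    ext t
    change c.1 (1 * t) = c.1 t
    rw [one_mul]

theorem xp_inj [CompleteSpace Y] [SimplyConnectedSpace Y] (hgood : ∀ y : Y, ∃ r > 0, Good y r)
    {a : Y} {c c' : LGS a} (h : xp c = xp c') : c = c' := by
  have := LGS_complete hgood a
  obtain ⟨Γ, h0, h1⟩ := exists_contract c
  obtain ⟨Γ', h0', h1'⟩ := exists_contract c'
  rw [← h1, ← h1']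
  refine (xp_locIso hgood a).endpoint_unique hgood Γ Γ' ?_ (by rw [h1, h1', h])
  apply Subtype.ext
  ext t
  rw [h0, h0']

theorem lift_real [CompleteSpace Y] (hgood : ∀ y : Y, ∃ r > 0, Good y r)
    {a : Y} (c : LGS a) {σ : ℝ → Y} (hσ : ContinuousOn σ (Icc 0 1)) (h0 : σ 0 = xp c) :
    ∃ Γ : ℝ → LGS a, ContinuousOn Γ (Icc 0 1) ∧ Γ 0 = c ∧ ∀ s ∈ Icc (0:ℝ) 1, xp (Γ s) = σ s := by
  have := LGS_complete hgood a
  obtain ⟨Γ, h1, h2⟩ := (xp_locIso hgood a).path_lifts hgood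
    ⟨fun t => σ t, hσ.comp_continuous continuous_subtype_val (fun t => t.2)⟩ c (by simpa using h0)
  refine ⟨IccExtend zero_le_one Γ, (map_continuous Γ).Icc_extend'.continuousOn, ?_, fun s hs => ?_⟩
  · rw [IccExtend_of_mem _ _ (by simp : (0:ℝ) ∈ Icc (0:ℝ) 1)]; exact h2
  · rw [IccExtend_of_mem _ _ hs]; exact h1 _

theorem len_approx (hlen : ∀ a b : Y, lengthMetric a b = ENNReal.ofReal (dist a b)) (a b : Y)
    {ε : ℝ} (hε : 0 < ε) : ∃ σ : ℝ → Y, ContinuousOn σ (Icc 0 1) ∧ σ 0 = a ∧ σ 1 = b ∧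
      eVariationOn σ (Icc 0 1) ≠ ⊤ ∧ (eVariationOn σ (Icc 0 1)).toReal < dist a b + ε := by
  have h : lengthMetric a b < ENNReal.ofReal (dist a b + ε) := by
    rw [hlen]; exact (ENNReal.ofReal_lt_ofReal_iff (by positivity)).2 (by linarith)
  rw [lengthMetric, iInf_lt_iff] at h
  obtain ⟨⟨σ, h1, h2, h3, h4⟩, h⟩ := h
  refine ⟨σ, h1, h2, h3, h4, ?_⟩
  have := (ENNReal.toReal_lt_toReal h4 ENNReal.ofReal_ne_top).2 h
  rwa [ENNReal.toReal_ofReal (by positivity)] at this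

section
variable [CompleteSpace Y] (hgood : ∀ y : Y, ∃ r > 0, Good y r)
  (hlen : ∀ a b : Y, lengthMetric a b = ENNReal.ofReal (dist a b))
include hgood hlen

theorem xp_surj {a : Y} (c : LGS a) (y : Y) : ∃ c' : LGS a, xp c' = y := by
  obtain ⟨σ, h1, h2, h3, h4, h5⟩ := len_approx hlen (xp c) y one_pos
  obtain ⟨Γ, g1, g2, g3⟩ := lift_real hgood c h1 h2
  exact ⟨Γ 1, (g3 1 (by simp)).trans h3⟩

theorem F_bound [SimplyConnectedSpace Y] {a : Y} {F : LGS a → LGS a → ℝ}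
    (hF : ∀ x y z, F x z ≤ F x y + F y z) (hF0 : ∀ x, F x x ≤ 0) {K : ℝ} (hK : 0 ≤ K)
    (hloc : ∀ e, ∃ ε > 0, ∀ e' ∈ ball e ε, ∀ e'' ∈ ball e ε, F e' e'' ≤ K * dist (xp e') (xp e''))
    (c c' : LGS a) : F c c' ≤ K * dist (xp c) (xp c') := by
  have key : ∀ ε > 0, F c c' ≤ K * (dist (xp c) (xp c') + ε) := by
    intro ε hε
    obtain ⟨σ, h1, h2, h3, h4, h5⟩ := len_approx hlen (xp c) (xp c') hε
    obtain ⟨Γ, g1, g2, g3⟩ := lift_real hgood c h1 h2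
    have := chain_bound hF hF0 hloc hK g1 g3 h4
    rw [g2, xp_inj hgood ((g3 1 (by simp)).trans h3)] at this
    exact this.trans (mul_le_mul_of_nonneg_left h5.le hK)
  refine le_of_forall_pos_le_add fun ε hε => (key (ε / (K + 1)) (by positivity)).trans ?_
  rw [mul_add]
  gcongr
  rw [mul_div_assoc', div_le_iff₀ (by positivity)]
  nlinarith

end

theorem LG.lip {f : ℝ → Y} {lam δ : ℝ} (h : LG f lam δ) (hδ : 0 < δ) :
    ∀ s ∈ Icc (0:ℝ) 1, ∀ t ∈ Icc (0:ℝ) 1, dist (f s) (f t) ≤ lam * |s - t| := by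
  have hl := h.lam_nonneg hδ
  have key : ∀ u v : ℝ, 0 ≤ u → u ≤ v → v ≤ 1 → dist (f u) (f v) ≤ lam * (v - u) := by
    intro u v hu huv hv
    let p : ℝ → ℝ := fun x => projIcc (0:ℝ) 1 zero_le_one x
    let g : ℝ → ℝ := fun s => u + s * (v - u)
    have hg : MonotoneOn g (Icc 0 1) := fun x _ y _ hxy => by
      simp only [g]; nlinarith
    have hvar := (hg.eVariationOn_eq (a := 0) (b := 1) (by simp) (by simp)).le
    rw [inter_self] at hvar
    have hg01 : g 1 - g 0 = v - u := by simp only [g]; ring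
    rw [hg01] at hvar
    have := chain_bound (q := (id : ℝ → ℝ)) (F := fun x y => dist (f (p x)) (f (p y)))
      (fun _ _ _ => dist_triangle _ _ _) (fun _ => by simp) (K := lam)
      (fun e => ⟨δ / 2, by positivity, fun x hx y hy => ?_⟩) hl (Γ := g) (by fun_prop) (τ := g)
      (fun s _ => rfl) (ne_top_of_le_ne_top ENNReal.ofReal_ne_top hvar)
    · refine le_trans (by simp [g, p, projIcc_of_mem zero_le_one
        (⟨hu, huv.trans hv⟩ : u ∈ Icc (0:ℝ) 1), projIcc_of_mem zero_le_one
        (⟨hu.trans huv, hv⟩ : v ∈ Icc (0:ℝ) 1)]) (this.trans (mul_le_mul_of_nonneg_left ?_ hl))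
      exact ENNReal.toReal_le_of_le_ofReal (by linarith) hvar
    · have h1 : |p x - p y| ≤ |x - y| := abs_projIcc_sub_projIcc zero_le_one
      have h2 : |x - y| < δ := by
        have := dist_triangle_right x y e
        rw [mem_ball] at hx hy
        rw [Real.dist_eq x y] at this
        linarith
      rw [h _ (projIcc _ _ _ x).2 _ (projIcc _ _ _ y).2 (h1.trans h2.le)]
      exact mul_le_mul_of_nonneg_left h1 hl
  intro s hs t ht
  rcases le_total s t with hst | hst
  · rw [abs_sub_comm, abs_of_nonneg (by linarith)]; exact key s t hs.1 hst ht.2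
  · rw [dist_comm, abs_of_nonneg (by linarith)]; exact key t s ht.1 hst hs.2

/-- speed -/
noncomputable def spd {a : Y} (c : LGS a) : ℝ := c.2.1.choose

theorem spd_spec {a : Y} (c : LGS a) : ∃ δ, 0 < δ ∧ LG (ex c.1) (spd c) δ := c.2.1.choose_spec

theorem spd_const {a : Y} (c : LGS a) (h : ∀ t, c.1 t = a) : spd c = 0 := by
  obtain ⟨δ, hδ, hl⟩ := spd_spec c
  refine hl.lam_unique hδ (g := fun _ => a) (lam' := 0) (δ' := 1) (fun s _ t _ _ => by simp) one_pos ?_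
  intro t ht
  rw [ex_of_mem _ ht, h]

theorem spd_near {a : Y} (c c' : LGS a)
    (h : ∀ t ∈ Icc (0:ℝ) 1, dist (ex c.1 t) (ex c'.1 t) ≤ t * dist (xp c) (xp c')) :
    spd c' - spd c ≤ 1 * dist (xp c) (xp c') := by
  obtain ⟨δ, hδ, hl⟩ := spd_spec c
  obtain ⟨δ', hδ', hl'⟩ := spd_spec c'
  set m := min (min δ δ') 1 with hm
  have hmp : 0 < m := by positivity
  have hm1 : m ∈ Icc (0:ℝ) 1 := ⟨hmp.le, min_le_right _ _⟩
  have e : |0 - m| = m := by rw [zero_sub, abs_neg, abs_of_pos hmp]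
  have h1 := hl 0 (by simp) m hm1 (by rw [e]; exact (min_le_left _ _).trans (min_le_left _ _))
  have h2 := hl' 0 (by simp) m hm1 (by rw [e]; exact (min_le_left _ _).trans (min_le_right _ _))
  rw [e, ex_at_zero] at h1 h2
  have h3 := dist_triangle a (ex c.1 m) (ex c'.1 m)
  have h4 := h m hm1
  rw [one_mul]
  refine le_of_mul_le_mul_right ?_ hmp
  nlinarith

section
variable [CompleteSpace Y] [SimplyConnectedSpace Y] (hgood : ∀ y : Y, ∃ r > 0, Good y r)
  (hlen : ∀ a b : Y, lengthMetric a b = ENNReal.ofReal (dist a b))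
include hgood hlen

theorem spd_le {a : Y} (c : LGS a) : spd c ≤ dist a (xp c) := by
  obtain ⟨Γ, h0, h1⟩ := exists_contract c
  have := F_bound hgood hlen (F := fun c c' : LGS a => spd c' - spd c) (K := 1)
    (fun _ _ _ => by linarith) (fun _ => by simp) zero_le_one (fun e => by
      obtain ⟨ε, hε, h⟩ := near hgood e
      exact ⟨ε, hε, fun e' he' e'' he'' => spd_near _ _ (h e' he' e'' he'')⟩) (Γ 0) c
  rw [spd_const _ h0, sub_zero, one_mul] at this
  have h2 : xp (Γ 0) = a := h0 1
  rwa [h2] at this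

theorem seg_of_LGS {a : Y} (c : LGS a) : IsGeodesicSeg (ex c.1) a (xp c) := by
  refine ⟨ex_at_zero c, ex_at_one c, ?_⟩
  obtain ⟨δ, hδ, hl⟩ := spd_spec c
  have hlip : ∀ s ∈ Icc (0:ℝ) 1, ∀ t ∈ Icc (0:ℝ) 1,
      dist (ex c.1 s) (ex c.1 t) ≤ dist a (xp c) * |s - t| := fun s hs t ht =>
    (hl.lip hδ s hs t ht).trans (mul_le_mul_of_nonneg_right (spd_le hgood hlen c) (abs_nonneg _))
  have key : ∀ s ∈ Icc (0:ℝ) 1, ∀ t ∈ Icc (0:ℝ) 1, s ≤ t →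
      dist (ex c.1 s) (ex c.1 t) = dist a (xp c) * |s - t| := by
    intro s hs t ht hst
    refine le_antisymm (hlip s hs t ht) ?_
    have h1 := hlip 0 (by simp) s hs
    have h2 := hlip t ht 1 (by simp)
    rw [ex_at_zero, zero_sub, abs_neg, abs_of_nonneg hs.1] at h1
    rw [ex_at_one, abs_of_nonpos (by linarith [ht.2])] at h2
    rw [abs_of_nonpos (by linarith)]
    have h3 := dist_triangle4 a (ex c.1 s) (ex c.1 t) (xp c)
    nlinarith
  intro s hs t ht
  rcases le_total s t with hst | hst
  · exact key s hs t ht hst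
  · rw [dist_comm, abs_sub_comm]; exact key t ht s hs hst

end

theorem seg_LocGeo {γ : ℝ → Y} {a b : Y} (h : IsGeodesicSeg γ a b) : LocGeo γ :=
  ⟨dist a b, 1, one_pos, fun s hs t ht _ => h.2.2 s hs t ht⟩

theorem seg_rev {γ : ℝ → Y} {a b : Y} (h : IsGeodesicSeg γ a b) :
    IsGeodesicSeg (fun t => γ (1 - t)) b a := by
  refine ⟨by simp [h.2.1], by simp [h.1], fun s hs t ht => ?_⟩
  rw [h.2.2 _ ⟨by linarith [hs.2], by linarith [hs.1]⟩ _ ⟨by linarith [ht.2], by linarith [ht.1]⟩,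
    dist_comm a b, abs_sub_comm]
  congr 2; ring

section
variable [CompleteSpace Y] [SimplyConnectedSpace Y] (hgood : ∀ y : Y, ∃ r > 0, Good y r)
  (hlen : ∀ a b : Y, lengthMetric a b = ENNReal.ofReal (dist a b))
include hgood hlen

theorem exists_unique_seg (a b : Y) : ∃ γ : ℝ → Y, IsGeodesicSeg γ a b ∧
      ∀ γ' : ℝ → Y, IsGeodesicSeg γ' a b → Set.EqOn γ γ' (Set.Icc 0 1) := by
  have h0 : LocGeo (fun _ : ℝ => a) := ⟨0, 1, one_pos, fun s _ t _ _ => by simp⟩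
  obtain ⟨c, hc⟩ := xp_surj hgood hlen (mk _ h0 a rfl) b
  refine ⟨ex c.1, by rw [← hc]; exact seg_of_LGS hgood hlen c, fun γ' h t ht => ?_⟩
  have : c = mk γ' (seg_LocGeo h) a h.1 := by
    apply xp_inj hgood
    rw [hc, ← ex_at_one, ex_mk _ _ _ _ (by simp), h.2.1]
  rw [this, ex_mk _ _ _ _ ht]

theorem convex_start {γ₁ γ₂ : ℝ → Y} {a b b' : Y} (h1 : IsGeodesicSeg γ₁ a b)
    (h2 : IsGeodesicSeg γ₂ a b') {t : ℝ} (ht : t ∈ Icc (0:ℝ) 1) :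
    dist (γ₁ t) (γ₂ t) ≤ t * dist b b' := by
  have := F_bound hgood hlen (F := fun c c' : LGS a => dist (ex c.1 t) (ex c'.1 t)) (K := t)
    (fun _ _ _ => dist_triangle _ _ _) (fun _ => by simp) ht.1 (fun e => by
      obtain ⟨ε, hε, h⟩ := near hgood e
      exact ⟨ε, hε, fun e' he' e'' he'' => h e' he' e'' he'' t ht⟩)
    (mk γ₁ (seg_LocGeo h1) a h1.1) (mk γ₂ (seg_LocGeo h2) a h2.1)
  rwa [← ex_at_one, ← ex_at_one, ex_mk _ _ _ _ ht, ex_mk _ _ _ _ ht, ex_mk _ _ _ _ (by simp),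
    ex_mk _ _ _ _ (by simp), h1.2.1, h2.2.1] at this

theorem convex_all {γ₁ γ₂ : ℝ → Y} {a b a' b' : Y} (h1 : IsGeodesicSeg γ₁ a b)
    (h2 : IsGeodesicSeg γ₂ a' b') {t : ℝ} (ht : t ∈ Icc (0:ℝ) 1) :
    dist (γ₁ t) (γ₂ t) ≤ (1 - t) * dist a a' + t * dist b b' := by
  obtain ⟨γ₃, h3, _⟩ := exists_unique_seg hgood hlen a b'
  have e1 := convex_start hgood hlen h1 h3 ht
  have e2 := convex_start hgood hlen (seg_rev h3) (seg_rev h2) (t := 1 - t)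
    ⟨by linarith [ht.2], by linarith [ht.1]⟩
  simp only [sub_sub_cancel] at e2
  linarith [dist_triangle (γ₁ t) (γ₃ t) (γ₂ t)]

end
end CH

namespace CH
open Set Metric Filter Topology
variable {X Y : Type*} [MetricSpace X] [MetricSpace Y]

theorem good_of_locconv {x : X} {U : Set X}
    (hU : (∀ a ∈ U, ∀ b ∈ U, ∃ γ : ℝ → X, γ 0 = a ∧ γ 1 = b ∧ IsGeodesicIn U γ) ∧
      (∀ γ₁ γ₂ : ℝ → X, IsGeodesicIn U γ₁ → IsGeodesicIn U γ₂ →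
        ∀ t ∈ Set.Icc (0:ℝ) 1,
          dist (γ₁ t) (γ₂ t) ≤ (1 - t) * dist (γ₁ 0) (γ₂ 0) + t * dist (γ₁ 1) (γ₂ 1)))
    {r : ℝ} (hr : 0 < r) (hsub : ball x r ⊆ U) : Good x r := by
  refine ⟨fun a ha b hb => ?_, fun γ₁ γ₂ h1 h2 =>
    hU.2 _ _ ⟨fun t ht => hsub (h1.1 t ht), h1.2⟩ ⟨fun t ht => hsub (h2.1 t ht), h2.2⟩⟩
  obtain ⟨γ, h0, h1, hγ⟩ := hU.1 a (hsub ha) b (hsub hb)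
  refine ⟨γ, h0, h1, fun t ht => ?_, hγ.2⟩
  have := hU.2 γ (fun _ => x) hγ ⟨fun t _ => hsub (mem_ball_self hr), 0, by simp⟩ t ht
  rw [h0, h1] at this
  rw [mem_ball] at ha hb ⊢
  obtain ⟨t0, t1⟩ := ht
  rcases t0.eq_or_lt with h | h
  · subst h; simp at this; linarith
  · nlinarith

theorem good_cover (hlocconv : ∀ x : X, ∃ U ∈ nhds x,
      (∀ a ∈ U, ∀ b ∈ U, ∃ γ : ℝ → X, γ 0 = a ∧ γ 1 = b ∧ IsGeodesicIn U γ) ∧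
      (∀ γ₁ γ₂ : ℝ → X, IsGeodesicIn U γ₁ → IsGeodesicIn U γ₂ →
        ∀ t ∈ Set.Icc (0:ℝ) 1,
          dist (γ₁ t) (γ₂ t) ≤ (1 - t) * dist (γ₁ 0) (γ₂ 0) + t * dist (γ₁ 1) (γ₂ 1)))
    (p : Y → X) (hcov : IsCoveringMap p)
    (hlociso : ∀ y : Y, ∃ ε > (0:ℝ), ∀ a ∈ Metric.ball y ε, ∀ b ∈ Metric.ball y ε,
      dist (p a) (p b) = dist a b) (y : Y) : ∃ r > 0, Good y r := by
  obtain ⟨U, hU, hU'⟩ := hlocconv (p y)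
  obtain ⟨ε, hε, hiso⟩ := hlociso y
  have hV : p '' ball y ε ∈ 𝓝 (p y) :=
    (hcov.isOpenMap _ isOpen_ball).mem_nhds (mem_image_of_mem _ (mem_ball_self hε))
  obtain ⟨r0, hr0, hsub⟩ := Metric.mem_nhds_iff.1 (inter_mem hU hV)
  set r := min r0 ε with hrdef
  have hr : 0 < r := by positivity
  have hsub' : ball (p y) r ⊆ U ∩ p '' ball y ε :=
    (ball_subset_ball (min_le_left _ _)).trans hsub
  have hre : ball y r ⊆ ball y ε := ball_subset_ball (min_le_right _ _)
  have hG : Good (p y) r := good_of_locconv hU' hr (hsub'.trans inter_subset_left)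
  have hmap : ∀ a ∈ ball y r, p a ∈ ball (p y) r := by
    intro a ha
    rw [mem_ball, hiso a (hre ha) y (mem_ball_self hε)]; exact ha
  have hex : ∀ x, x ∈ ball (p y) r → ∃ a ∈ ball y r, p a = x := by
    intro x hx
    obtain ⟨a, ha, rfl⟩ := (hsub' hx).2
    refine ⟨a, ?_, rfl⟩
    rw [mem_ball, hiso a ha y (mem_ball_self hε)] at hx; exact hx
  have : Nonempty Y := ⟨y⟩
  choose! g hg1 hg2 using hex
  have hgp : ∀ a ∈ ball y r, g (p a) = a := by
    intro a ha
    have := hiso _ (hre (hg1 _ (hmap a ha))) a (hre ha)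
    rw [hg2 _ (hmap a ha), dist_self] at this
    exact dist_eq_zero.1 this.symm
  refine ⟨r, hr, fun a ha b hb => ?_, ?_⟩
  · obtain ⟨γ, h0, h1, h2, lam, h3⟩ := hG.1 _ (hmap a ha) _ (hmap b hb)
    refine ⟨fun t => g (γ t), by simp [h0, hgp a ha], by simp [h1, hgp b hb],
      fun t ht => hg1 _ (h2 t ht), lam, fun s hs t ht => ?_⟩
    rw [← hiso _ (hre (hg1 _ (h2 s hs))) _ (hre (hg1 _ (h2 t ht))), hg2 _ (h2 s hs),
      hg2 _ (h2 t ht), h3 s hs t ht]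
  · rintro γ₁ γ₂ ⟨h1, lam1, h1'⟩ ⟨h2, lam2, h2'⟩ t ht
    have := hG.2 (fun t => p (γ₁ t)) (fun t => p (γ₂ t))
      ⟨fun t ht => hmap _ (h1 t ht), lam1, fun s hs t ht => by
        rw [hiso _ (hre (h1 s hs)) _ (hre (h1 t ht)), h1' s hs t ht]⟩
      ⟨fun t ht => hmap _ (h2 t ht), lam2, fun s hs t ht => by
        rw [hiso _ (hre (h2 s hs)) _ (hre (h2 t ht)), h2' s hs t ht]⟩ t ht
    have z0 : (0:ℝ) ∈ Icc (0:ℝ) 1 := by simp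
    have z1 : (1:ℝ) ∈ Icc (0:ℝ) 1 := by simp
    rwa [hiso _ (hre (h1 t ht)) _ (hre (h2 t ht)), hiso _ (hre (h1 0 z0)) _ (hre (h2 0 z0)),
      hiso _ (hre (h1 1 z1)) _ (hre (h2 1 z1))] at this

theorem p_lip (p : Y → X)
    (hlociso : ∀ y : Y, ∃ ε > (0:ℝ), ∀ a ∈ Metric.ball y ε, ∀ b ∈ Metric.ball y ε,
      dist (p a) (p b) = dist a b)
    (hYlen : ∀ a b : Y, lengthMetric a b = ENNReal.ofReal (dist a b)) (a b : Y) :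
    dist (p a) (p b) ≤ dist a b := by
  refine le_of_forall_pos_le_add fun ε hε => ?_
  obtain ⟨σ, h1, h2, h3, h4, h5⟩ := len_approx hYlen a b hε
  have := chain_bound (q := (id : Y → Y)) (τ := σ) (F := fun x y => dist (p x) (p y)) (K := 1)
    (fun _ _ _ => dist_triangle _ _ _) (fun _ => by simp)
    (fun e => by
      obtain ⟨ε, hε, h⟩ := hlociso e
      exact ⟨ε, hε, fun x hx y hy => by rw [h x hx y hy, one_mul]; rfl⟩) zero_le_one h1
    (fun _ _ => rfl) h4
  simp only [h2, h3, one_mul] at this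
  linarith

theorem cover_complete [CompleteSpace X] (p : Y → X) (hcov : IsCoveringMap p)
    (hlociso : ∀ y : Y, ∃ ε > (0:ℝ), ∀ a ∈ Metric.ball y ε, ∀ b ∈ Metric.ball y ε,
      dist (p a) (p b) = dist a b)
    (hYlen : ∀ a b : Y, lengthMetric a b = ENNReal.ofReal (dist a b)) : CompleteSpace Y := by
  have hlip := p_lip p hlociso hYlen
  refine Metric.complete_of_cauchySeq_tendsto fun u hu => ?_
  have hpu : CauchySeq (fun n => p (u n)) := by
    rw [Metric.cauchySeq_iff] at hu ⊢
    intro ε hε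
    obtain ⟨N, hN⟩ := hu ε hε
    exact ⟨N, fun m hm n hn => (hlip _ _).trans_lt (hN m hm n hn)⟩
  obtain ⟨x, hx⟩ := cauchySeq_tendsto_of_complete hpu
  obtain ⟨disc, U, hxU, hU, hfU, H, hH⟩ := hcov x
  obtain ⟨r, hr, hrU⟩ := Metric.mem_nhds_iff.1 (hU.mem_nhds hxU)
  obtain ⟨N1, hN1⟩ := Metric.tendsto_atTop.1 hx (r / 2) (by positivity)
  obtain ⟨N2, hN2⟩ := Metric.cauchySeq_iff.1 hu (r / 4) (by positivity)
  set N := max N1 N2 with hN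
  have hmem : ∀ n, p (u (n + N)) ∈ U := fun n => hrU (by
    have := hN1 (n + N) ((le_max_left _ _).trans (Nat.le_add_left _ _))
    rw [mem_ball]; linarith)
  have hmem0 : p (u N) ∈ U := by simpa using hmem 0
  have hfib : ∀ n, (H ⟨u (n + N), hmem n⟩).2 = (H ⟨u N, hmem0⟩).2 := by
    intro n
    obtain ⟨σ, h1, h2, h3, h4, h5⟩ := len_approx hYlen (u N) (u (n + N))
      (ε := r / 4) (by positivity)
    have h6 := hN2 N (le_max_right _ _) (n + N) ((le_max_right _ _).trans (Nat.le_add_left _ _))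
    have hσU : ∀ t ∈ Icc (0:ℝ) 1, p (σ t) ∈ U := by
      intro t ht
      apply hrU
      have e1 : dist (σ t) (σ 0) ≤ (eVariationOn σ (Icc 0 1)).toReal := by
        have := ENNReal.toReal_mono h4 (eVariationOn.edist_le σ ht (by simp : (0:ℝ) ∈ Icc (0:ℝ) 1))
        rwa [edist_dist, ENNReal.toReal_ofReal dist_nonneg] at this
      rw [h2] at e1
      have e2 := hN1 N (le_max_left _ _)
      have e3 := hlip (σ t) (u N)
      have e4 := dist_triangle (p (σ t)) (p (u N)) x
      rw [mem_ball]; linarith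
    have hc : Continuous (fun t : unitInterval => (H ⟨σ t, hσU t t.2⟩).2) := by
      have : Continuous (fun t : unitInterval => (⟨σ t, hσU t t.2⟩ : p ⁻¹' U)) :=
        Continuous.subtype_mk (h1.comp_continuous continuous_subtype_val (fun t => t.2)) _
      exact continuous_snd.comp (H.continuous.comp this)
    have := PreconnectedSpace.constant (inferInstance : PreconnectedSpace unitInterval) hc
      (x := 1) (y := 0)
    simpa only [Icc.coe_zero, Icc.coe_one, h2, h3]
      using this
  have hv : ∀ n, u (n + N) = (H.symm (⟨p (u (n + N)), hmem n⟩, (H ⟨u N, hmem0⟩).2)).1 := by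
    intro n
    have : (⟨p (u (n + N)), hmem n⟩, (H ⟨u N, hmem0⟩).2) = H ⟨u (n + N), hmem n⟩ := by
      refine Prod.ext (Subtype.ext ?_) (hfib n).symm
      exact (hH ⟨u (n + N), hmem n⟩).symm
    rw [this, H.symm_apply_apply]
  have hw : Tendsto (fun n => (⟨p (u (n + N)), hmem n⟩ : U)) atTop (𝓝 ⟨x, hxU⟩) := by
    rw [tendsto_subtype_rng]
    exact (tendsto_add_atTop_iff_nat N).2 hx
  refine ⟨(H.symm (⟨x, hxU⟩, (H ⟨u N, hmem0⟩).2)).1, (tendsto_add_atTop_iff_nat N).1 ?_⟩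
  have hcont : Continuous (fun w : U => (H.symm (w, (H ⟨u N, hmem0⟩).2)).1) := by fun_prop
  exact ((hcont.tendsto _).comp hw).congr fun n => (hv n).symm

end CH

/-- (Cartan–Hadamard, metric version) Let `X` be a complete, path-connected length space
whose metric is locally convex. If `p : Y → X` is a universal covering map (`Y` simply
connected) which is a local isometry, and the metric of `Y` is the induced length metric
(i.e. `Y` is a length space), then the metric on `Y` is globally convex and `Y` is
uniquely geodesic. -/
theorem cartan_hadamard {X Y : Type*} [MetricSpace X] [MetricSpace Y]
    [CompleteSpace X] [PathConnectedSpace X] [SimplyConnectedSpace Y]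
    (hXlen : ∀ x y : X, lengthMetric x y = ENNReal.ofReal (dist x y))
    (hlocconv : ∀ x : X, ∃ U ∈ nhds x,
      (∀ a ∈ U, ∀ b ∈ U, ∃ γ : ℝ → X, γ 0 = a ∧ γ 1 = b ∧ IsGeodesicIn U γ) ∧
      (∀ γ₁ γ₂ : ℝ → X, IsGeodesicIn U γ₁ → IsGeodesicIn U γ₂ →
        ∀ t ∈ Set.Icc (0:ℝ) 1,
          dist (γ₁ t) (γ₂ t) ≤ (1 - t) * dist (γ₁ 0) (γ₂ 0) + t * dist (γ₁ 1) (γ₂ 1)))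
    (p : Y → X) (hcov : IsCoveringMap p)
    (hlociso : ∀ y : Y, ∃ ε > (0:ℝ), ∀ a ∈ Metric.ball y ε, ∀ b ∈ Metric.ball y ε,
      dist (p a) (p b) = dist a b)
    (hYlen : ∀ a b : Y, lengthMetric a b = ENNReal.ofReal (dist a b)) :
    (∀ γ₁ γ₂ : ℝ → Y, IsGeodesicSeg γ₁ (γ₁ 0) (γ₁ 1) → IsGeodesicSeg γ₂ (γ₂ 0) (γ₂ 1) →
      ∀ t ∈ Set.Icc (0:ℝ) 1,
        dist (γ₁ t) (γ₂ t) ≤ (1 - t) * dist (γ₁ 0) (γ₂ 0) + t * dist (γ₁ 1) (γ₂ 1)) ∧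
    (∀ a b : Y, ∃ γ : ℝ → Y, IsGeodesicSeg γ a b ∧
      ∀ γ' : ℝ → Y, IsGeodesicSeg γ' a b → Set.EqOn γ γ' (Set.Icc 0 1)) := by
  have hgood := CH.good_cover hlocconv p hcov hlociso
  have := CH.cover_complete p hcov hlociso hYlen
  exact ⟨fun γ₁ γ₂ h1 h2 t ht => CH.convex_all hgood hYlen h1 h2 ht,
    fun a b => CH.exists_unique_seg hgood hYlen a b⟩
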